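/- arXiv:1404.1099 — 3 statements merged into one kernel-verified Lean document; each statement's English description precedes it below -/
import Mathlib

section
/- Let n ≥ 3 and α > n−1. Then every homeomorphism of finite distortion between domains in ℝ^n of the Sobolev class W^{1,α}_loc is a lower K_p(x,f)-homeomorphism with respect to p-modulus at every point, for every p > n−1. -/
open MeasureTheory Metric Set Filter
open scoped ENNReal NNReal Topology RealInnerProductSpace Classical

noncomputable section

abbrev Eucl (n : ℕ) : Type := EuclideanSpace ℝ (Fin n)

/-- A `k`-dimensional surface in `ℝⁿ`: a continuous map defined on an open subset of the
one-point compactification of `ℝᵏ`. -/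
structure Surface (n k : ℕ) where
  dom : Set (OnePoint (Eucl k))
  isOpen_dom : IsOpen dom
  toFun : OnePoint (Eucl k) → Eucl n
  continuousOn : ContinuousOn toFun dom

namespace Surface

variable {n k : ℕ}

/-- The multiplicity function `N(S,y)` of a surface. -/
def mult (S : Surface n k) (y : Eucl n) : ℝ≥0∞ :=
  ((S.dom ∩ S.toFun ⁻¹' {y}).encard : ℕ∞)

/-- The integral `∫_S ρ dA = ∫ ρ(y) N(S,y) dH^k(y)` of `ρ` over the surface `S`. -/
def sint (S : Surface n k) (ρ : Eucl n → ℝ≥0∞) : ℝ≥0∞ :=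
  ∫⁻ y, ρ y * S.mult y ∂(μH[(k : ℝ)] : Measure (Eucl n))

end Surface

/-- Admissible functions for a family of `k`-surfaces. -/
def surfAdm {n : ℕ} (k : ℕ) (Γ : Set (Surface n k)) : Set (Eucl n → ℝ≥0∞) :=
  {ρ | Measurable ρ ∧ ∀ S ∈ Γ, 1 ≤ S.sint fun y => ρ y ^ k}

/-- The `p`-modulus of a family of `k`-surfaces. -/
def surfModulus {n : ℕ} (p : ℝ) (k : ℕ) (Γ : Set (Surface n k)) : ℝ≥0∞ :=
  ⨅ ρ ∈ surfAdm k Γ, ∫⁻ x, ρ x ^ p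

/-- Extensively `p`-admissible functions: admissibility may fail on a subfamily of
`p`-modulus zero. -/
def extAdm {n : ℕ} (p : ℝ) (k : ℕ) (Γ : Set (Surface n k)) : Set (Eucl n → ℝ≥0∞) :=
  {ρ | Measurable ρ ∧ surfModulus p k {S ∈ Γ | ¬ 1 ≤ S.sint fun y => ρ y ^ k} = 0}

/-- The family of the (injectively parametrized, nonempty) surfaces `S(x₀,r) ∩ D`,
`r ∈ I`. -/
def sphereFam {n : ℕ} (D : Set (Eucl n)) (x₀ : Eucl n) (I : Set ℝ) :
    Set (Surface n (n - 1)) :=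
  {S | ∃ r ∈ I, S.dom.Nonempty ∧ Set.InjOn S.toFun S.dom ∧
      S.toFun '' S.dom = sphere x₀ r ∩ D}

/-- The image of a family of surfaces under a map `f`. -/
def imageFam {n k : ℕ} (f : Eucl n → Eucl n) (Γ : Set (Surface n k)) :
    Set (Surface n k) :=
  {S' | ∃ S ∈ Γ, S'.dom = S.dom ∧ Set.EqOn S'.toFun (f ∘ S.toFun) S.dom}

/-- The spherical ring `R(x₀,a,b)`. -/
def ringA {n : ℕ} (x₀ : Eucl n) (a b : ℝ) : Set (Eucl n) :=
  {x | a < dist x x₀ ∧ dist x x₀ < b}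

/-- `‖Q‖_α(r) = (∫_{D ∩ S(x₀,r)} Q^α dA)^{1/α}`. -/
def sphNorm {n : ℕ} (D : Set (Eucl n)) (x₀ : Eucl n) (Q : Eucl n → ℝ≥0∞)
    (α : ℝ) (r : ℝ) : ℝ≥0∞ :=
  (∫⁻ x in D ∩ sphere x₀ r, Q x ^ α ∂(μH[((n : ℝ) - 1)] : Measure (Eucl n))) ^ (1 / α)

/-- `f` is a lower `Q`-homeomorphism w.r.t. the `p`-modulus at `x₀`. -/
def IsLowerQHomeoAt {n : ℕ} (D : Set (Eucl n)) (f : Eucl n → Eucl n)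
    (Q : Eucl n → ℝ≥0∞) (p : ℝ) (x₀ : Eucl n) (d₀ : ℝ≥0∞) : Prop :=
  ∀ ε ε₀ : ℝ, 0 < ε → ε < ε₀ → ENNReal.ofReal ε₀ < d₀ →
    (⨅ ρ ∈ extAdm p (n - 1) (sphereFam D x₀ (Ioo ε ε₀)),
        ∫⁻ x in ringA x₀ ε ε₀, ρ x ^ p / Q x) ≤
      surfModulus p (n - 1) (imageFam f (sphereFam D x₀ (Ioo ε ε₀)))

/-- `f` is a homeomorphism of `D` onto `D'`. -/
structure IsHomeoOn {n : ℕ} (f : Eucl n → Eucl n) (D D' : Set (Eucl n)) : Prop where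
  continuousOn : ContinuousOn f D
  injOn : Set.InjOn f D
  image_eq : f '' D = D'
  isOpenMapOn : ∀ U : Set (Eucl n), U ⊆ D → IsOpen U → IsOpen (f '' U)

/-- `Df` is the weak (Sobolev) derivative of `f` on `D`, and `f ∈ W^{1,1}_loc(D)`. -/
def IsWeakDerivOn {n m : ℕ} (D : Set (Eucl n)) (f : Eucl n → Eucl m)
    (Df : Eucl n → Eucl n →L[ℝ] Eucl m) : Prop :=
  LocallyIntegrableOn f D volume ∧ LocallyIntegrableOn Df D volume ∧
  ∀ ψ : Eucl n → ℝ, ContDiff ℝ (⊤ : ℕ∞) ψ → HasCompactSupport ψ → tsupport ψ ⊆ D →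
    ∀ v : Eucl n, ∫ x, ψ x • Df x v = - ∫ x, fderiv ℝ ψ x v • f x

/-- The Frobenius norm `|∇f| = (Σ_{i,j} (∂f_i/∂x_j)²)^{1/2}` of a linear map. -/
def frobNorm {n m : ℕ} (A : Eucl n →L[ℝ] Eucl m) : ℝ :=
  Real.sqrt (∑ i : Fin m, ∑ j : Fin n, (A (EuclideanSpace.single j 1) i) ^ 2)

/-- The Orlicz–Sobolev class `W^{1,φ}_loc(D)` (with explicit weak derivative `Df`). -/
def MemOrliczSobolevOn {n m : ℕ} (φ : ℝ → ℝ) (D : Set (Eucl n))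
    (f : Eucl n → Eucl m) (Df : Eucl n → Eucl n →L[ℝ] Eucl m) : Prop :=
  IsWeakDerivOn D f Df ∧
  ∀ K : Set (Eucl n), K ⊆ D → IsCompact K →
    (∫⁻ x in K, ENNReal.ofReal (φ (frobNorm (Df x)))) < ⊤

/-- `φ` is nondecreasing and positive on `(0,∞)`. -/
def NondecPos (φ : ℝ → ℝ) : Prop :=
  (∀ s t : ℝ, 0 < s → s ≤ t → φ s ≤ φ t) ∧ ∀ t : ℝ, 0 < t → 0 < φ t

/-- The Calderón-type condition `∫_{t₀}^∞ (t/φ(t))^{1/(n-2)} dt < ∞`. -/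
def CalderonCond (n : ℕ) (φ : ℝ → ℝ) : Prop :=
  ∃ t₀ : ℝ, 0 < t₀ ∧
    IntegrableOn (fun t => (t / φ t) ^ (1 / ((n : ℝ) - 2))) (Ioi t₀) volume

/-- `f` (with a.e. derivative `Df`) has finite distortion on `D`. -/
def HasFiniteDistortionOn {n : ℕ} (D : Set (Eucl n))
    (Df : Eucl n → Eucl n →L[ℝ] Eucl n) : Prop :=
  ∃ K : Eucl n → ℝ, AEMeasurable K (volume.restrict D) ∧
    ∀ᵐ x ∂volume.restrict D, 1 ≤ K x ∧ ‖Df x‖ ^ n ≤ K x * (Df x).det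

/-- The distortion `K_p(x,f)` for a map with derivative `Df`. -/
def distortionKp {n : ℕ} (p : ℝ) (Df : Eucl n → Eucl n →L[ℝ] Eucl n)
    (x : Eucl n) : ℝ≥0∞ :=
  if (Df x).det ≠ 0 then ENNReal.ofReal (‖Df x‖ ^ p / (Df x).det)
  else if Df x = 0 then 1 else ⊤

/-- The multiplicity function of a curve `γ : [0,1] → ℝⁿ`. -/
def curveMult {n : ℕ} (γ : ℝ → Eucl n) (y : Eucl n) : ℝ≥0∞ :=
  (({t ∈ Icc (0:ℝ) 1 | γ t = y}).encard : ℕ∞)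

/-- The line integral `∫_γ ρ ds = ∫ ρ(y) N(γ,y) dH¹(y)`. -/
def curveInt {n : ℕ} (γ : ℝ → Eucl n) (ρ : Eucl n → ℝ≥0∞) : ℝ≥0∞ :=
  ∫⁻ y, ρ y * curveMult γ y ∂(μH[(1 : ℝ)] : Measure (Eucl n))

/-- The family of curves joining `A` and `B` in `G`. -/
def curveJoin {n : ℕ} (A B G : Set (Eucl n)) : Set (ℝ → Eucl n) :=
  {γ | ContinuousOn γ (Icc 0 1) ∧ γ 0 ∈ A ∧ γ 1 ∈ B ∧ Set.MapsTo γ (Icc 0 1) G}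

/-- The `q`-modulus of a family of curves. -/
def curveModulus {n : ℕ} (q : ℝ) (Γ : Set (ℝ → Eucl n)) : ℝ≥0∞ :=
  ⨅ ρ ∈ {ρ : Eucl n → ℝ≥0∞ | Measurable ρ ∧ ∀ γ ∈ Γ, 1 ≤ curveInt γ ρ},
    ∫⁻ x, ρ x ^ q

/-- The `q`-capacity of the condenser `(A,C)`, via the modulus of joining curves. -/
def condenserCap {n : ℕ} (q : ℝ) (A C : Set (Eucl n)) : ℝ≥0∞ :=
  curveModulus q (curveJoin (frontier A) (frontier C) (A \ C))

/-- `L(x₀,f) = limsup_{x→x₀} |f(x)-f(x₀)|/|x-x₀|`. -/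
def LAt {n : ℕ} (f : Eucl n → Eucl n) (x₀ : Eucl n) : ℝ≥0∞ :=
  limsup (fun x => edist (f x) (f x₀) / edist x x₀) (𝓝[≠] x₀)

/-- `k_p(x₀) = limsup_{ε→0} (⨍_{B(x₀,ε)} K_p(x,f)^{(n-1)/(p-n+1)} dm)^{(p-n+1)/(n-1)}`. -/
def kpAt {n : ℕ} (p : ℝ) (Df : Eucl n → Eucl n →L[ℝ] Eucl n) (x₀ : Eucl n) : ℝ≥0∞ :=
  limsup (fun ε : ℝ =>
      ((∫⁻ x in ball x₀ ε, distortionKp p Df x ^ (((n:ℝ)-1)/(p-(n:ℝ)+1))) /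
        volume (ball x₀ ε)) ^ ((p-(n:ℝ)+1)/((n:ℝ)-1)))
    (𝓝[>] (0:ℝ))

/-- `f` is absolutely continuous on `S` w.r.t. `d`-dimensional Hausdorff measure. -/
def ACOnSet {n m : ℕ} (f : Eucl n → Eucl m) (S : Set (Eucl n)) (d : ℝ) : Prop :=
  ∀ ε : ℝ, 0 < ε → ∃ δ : ℝ, 0 < δ ∧ ∀ A : Set (Eucl n), A ⊆ S →
    (μH[d] : Measure (Eucl n)) A < ENNReal.ofReal δ →
      (μH[d] : Measure (Eucl m)) (f '' A) < ENNReal.ofReal ε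

/-- `f` is locally absolutely continuous on `S` w.r.t. `H^d`. -/
def LocACOnSet {n m : ℕ} (f : Eucl n → Eucl m) (S : Set (Eucl n)) (d : ℝ) : Prop :=
  ∀ x ∈ S, ∃ V ∈ 𝓝 x, ACOnSet f (S ∩ V) d

/-- The Luzin (N)-property of `f` on `S` w.r.t. `d`-dimensional Hausdorff measure. -/
def LusinNOn {n m : ℕ} (f : Eucl n → Eucl m) (S : Set (Eucl n)) (d : ℝ) : Prop :=
  ∀ A : Set (Eucl n), A ⊆ S → (μH[d] : Measure (Eucl n)) A = 0 →
    (μH[d] : Measure (Eucl m)) (f '' A) = 0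

end


theorem aux_path {E F : Type*} [NormedAddCommGroup E] [NormedSpace ℝ E]
    [NormedAddCommGroup F] [NormedSpace ℝ F] [CompleteSpace F] (u : E → F)
    (hu : ContDiff ℝ 1 u) (a b : E) :
    ‖u b - u a‖ₑ ≤ ∫⁻ t in Ioc (0:ℝ) 1, ‖fderiv ℝ u (a + t • (b - a))‖ₑ * ‖b - a‖ₑ := by
  have hder : ∀ t ∈ uIcc (0:ℝ) 1, HasDerivAt (fun t : ℝ => u (a + t • (b - a)))
      (fderiv ℝ u (a + t • (b - a)) (b - a)) t := by
    intro t _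
    have h1 : HasDerivAt (fun t : ℝ => a + t • (b - a)) (b - a) t := by
      simpa using ((hasDerivAt_id t).smul_const (b - a)).const_add a
    exact ((hu.differentiable one_ne_zero _).hasFDerivAt).comp_hasDerivAt t h1
  have hc : Continuous fun t : ℝ => fderiv ℝ u (a + t • (b - a)) (b - a) := by
    have := hu.continuous_fderiv one_ne_zero
    fun_prop
  have h := intervalIntegral.integral_eq_sub_of_hasDerivAt hder (hc.intervalIntegrable _ _)
  simp only [one_smul, zero_smul, add_zero, add_sub_cancel] at h
  rw [← h, intervalIntegral.integral_of_le zero_le_one]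
  refine (enorm_integral_le_lintegral_enorm _).trans (lintegral_mono fun t => ?_)
  exact ContinuousLinearMap.le_opENorm _ _

theorem aux_holder {X : Type*} [MeasurableSpace X] (μ : Measure X) {α : ℝ} (hα : 1 < α)
    {h : X → ℝ≥0∞} (hh : AEMeasurable h μ) :
    ∫⁻ x, h x ∂μ ≤ (∫⁻ x, h x ^ α ∂μ) ^ (1 / α) * μ univ ^ (1 / (α / (α - 1))) := by
  have hpq : α.HolderConjugate (α / (α - 1)) := Real.HolderConjugate.conjExponent hα
  have := ENNReal.lintegral_mul_le_Lp_mul_Lq μ hpq hh (aemeasurable_const (b := (1:ℝ≥0∞)))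
  simpa using this

theorem aux_affine {E : Type*} [NormedAddCommGroup E] [NormedSpace ℝ E] [MeasurableSpace E]
    [BorelSpace E] [FiniteDimensional ℝ E] (μ : Measure E) [μ.IsAddHaarMeasure]
    (g : E → ℝ≥0∞) (x : E) {t : ℝ} (ht : 0 < t) :
    ∫⁻ z, g (x + t • z) ∂μ = ENNReal.ofReal ((t ^ Module.finrank ℝ E)⁻¹) * ∫⁻ z, g z ∂μ := by
  have h1 : ∫⁻ z, g (x + z) ∂μ = ∫⁻ z, g z ∂μ := lintegral_add_left_eq_self g x
  have h2 : ∫⁻ z, g (x + z) ∂(Measure.map (t • ·) μ) = ∫⁻ z, g (x + t • z) ∂μ :=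
    lintegral_map_equiv (fun z => g (x + z)) (Homeomorph.smulOfNeZero t ht.ne').toMeasurableEquiv
  rw [← h2, Measure.map_addHaar_smul μ ht.ne', lintegral_smul_measure, h1, abs_of_pos]
  · rfl
  · positivity

theorem aux_morrey (d : ℕ) (hd : 1 ≤ d) (α : ℝ) (hα : (d:ℝ) < α) :
    ∃ C : ℝ≥0∞, C ≠ ⊤ ∧ ∀ (F : Type) [NormedAddCommGroup F] (h : (Fin d → ℝ) → ℝ≥0∞) (_ : Measurable h)
      (V : (Fin d → ℝ) → F)
      (_ : ∀ x ∈ closedBall (0 : Fin d → ℝ) 2, ∀ z ∈ closedBall (0 : Fin d → ℝ) 2,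
        ‖V z - V x‖ₑ ≤ ∫⁻ t in Ioc (0:ℝ) 1, h (x + t • (z - x))),
      ∀ x ∈ closedBall (0 : Fin d → ℝ) 2, ∀ x' ∈ closedBall (0 : Fin d → ℝ) 2,
        ‖V x - V x'‖ₑ ^ α ≤ C * ∫⁻ z in closedBall (0 : Fin d → ℝ) 2, h z ^ α := by
  have hd1 : (1:ℝ) ≤ d := by exact_mod_cast hd
  have hα1 : 1 < α := by linarith
  have hα0 : 0 < α := by linarith
  set Q := closedBall (0 : Fin d → ℝ) 2 with hQ
  set q : ℝ≥0∞ := volume Q with hq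
  have hq0 : q ≠ 0 := (measure_closedBall_pos _ _ (by norm_num)).ne'
  have hqt : q ≠ ⊤ := measure_closedBall_lt_top.ne
  set T : ℝ≥0∞ := ∫⁻ t in Ioc (0:ℝ) 1, ENNReal.ofReal ((t ^ d)⁻¹) ^ (1/α) with hT
  have hTt : T ≠ ⊤ := by
    have h1 : IntervalIntegrable (fun t : ℝ => t ^ (-(d/α))) volume 0 1 :=
      intervalIntegral.intervalIntegrable_rpow' (by
        have : (d:ℝ)/α < 1 := (div_lt_one hα0).2 hα
        linarith)
    rw [intervalIntegrable_iff_integrableOn_Ioc_of_le zero_le_one] at h1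
    have h2 := h1.lintegral_lt_top
    rw [hT]
    refine ne_of_lt (lt_of_le_of_lt (le_of_eq ?_) h2)
    refine setLIntegral_congr_fun measurableSet_Ioc fun t ht => ?_
    have ht0 : 0 < t := ht.1
    rw [ENNReal.ofReal_rpow_of_nonneg (by positivity) (by positivity)]
    congr 1
    rw [← Real.rpow_natCast, ← Real.rpow_neg ht0.le, ← Real.rpow_mul ht0.le]
    congr 1
    ring
  set B : ℝ≥0∞ := q ^ (1 / (α / (α - 1))) * T with hB
  have hBt : B ≠ ⊤ := ENNReal.mul_ne_top (ENNReal.rpow_ne_top_of_nonneg (by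
    have : 0 < α - 1 := by linarith
    positivity) hqt) hTt
  refine ⟨(2 * B / q) ^ α, ENNReal.rpow_ne_top_of_nonneg hα0.le
    (ENNReal.div_ne_top (ENNReal.mul_ne_top (by simp) hBt) hq0), ?_⟩
  intro F _ h hh V hV x hx x' hx'
  set I : ℝ≥0∞ := ∫⁻ z in Q, h z ^ α with hI
  have hmeas : ∀ x : Fin d → ℝ, Measurable (fun p : (Fin d → ℝ) × ℝ => h (x + p.2 • (p.1 - x))) := by
    intro x
    exact hh.comp (by fun_prop)
  have key : ∀ x ∈ Q, ∫⁻ z in Q, ∫⁻ t in Ioc (0:ℝ) 1, h (x + t • (z - x)) ≤ B * I ^ (1/α) := by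
    intro x hx
    rw [lintegral_lintegral_swap (hmeas x).aemeasurable]
    have h1 : ∀ t ∈ Ioc (0:ℝ) 1, ∫⁻ z in Q, h (x + t • (z - x)) ≤
        ENNReal.ofReal ((t ^ d)⁻¹) ^ (1/α) * (I ^ (1/α) * q ^ (1 / (α / (α - 1)))) := by
      intro t ht
      have hm : Measurable fun z => h (x + t • (z - x)) := hh.comp (by fun_prop)
      refine (aux_holder _ hα1 hm.aemeasurable).trans ?_
      rw [Measure.restrict_apply_univ, ← mul_assoc, ← ENNReal.mul_rpow_of_nonneg _ _ (by positivity)]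
      gcongr
      calc ∫⁻ z in Q, h (x + t • (z - x)) ^ α
          ≤ ∫⁻ z, Q.indicator (fun z => h z ^ α) ((x - t • x) + t • z) := by
            rw [← lintegral_indicator measurableSet_closedBall]
            refine lintegral_mono fun z => ?_
            by_cases hz : z ∈ Q
            · have he : x - t • x + t • z = x + t • (z - x) := by module
              have hm : x + t • (z - x) ∈ Q :=
                (convex_closedBall _ _).add_smul_sub_mem hx hz ⟨ht.1.le, ht.2⟩
              rw [indicator_of_mem hz, he, indicator_of_mem hm]
            · rw [indicator_of_notMem hz]; exact zero_le
        _ = _ := by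
            rw [aux_affine volume _ _ ht.1, lintegral_indicator measurableSet_closedBall]
            simp [hI, hQ]
    refine (setLIntegral_mono' measurableSet_Ioc h1).trans ?_
    rw [lintegral_mul_const _ (by fun_prop)]
    rw [hB]
    apply le_of_eq
    rw [← hT]
    ring
  have h2 : q * ‖V x - V x'‖ₑ ≤ 2 * (B * I ^ (1/α)) := by
    calc q * ‖V x - V x'‖ₑ = ∫⁻ z in Q, ‖V x - V x'‖ₑ := by
          rw [setLIntegral_const, mul_comm]
      _ ≤ ∫⁻ z in Q, ((∫⁻ t in Ioc (0:ℝ) 1, h (x + t • (z - x))) +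
            ∫⁻ t in Ioc (0:ℝ) 1, h (x' + t • (z - x'))) := by
          refine setLIntegral_mono' measurableSet_closedBall fun z hz => ?_
          refine le_trans ?_ (add_le_add (hV x hx z hz) (hV x' hx' z hz))
          calc ‖V x - V x'‖ₑ = ‖(V z - V x') - (V z - V x)‖ₑ := by congr 1; abel
            _ ≤ _ := by rw [add_comm]; exact enorm_sub_le
      _ = _ := lintegral_add_left ((hmeas x).lintegral_prod_right') _
      _ ≤ _ := by rw [two_mul]; exact add_le_add (key x hx) (key x' hx')
  have h3 : ‖V x - V x'‖ₑ ≤ 2 * B / q * I ^ (1/α) := by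
    rw [mul_comm] at h2
    have := (ENNReal.le_div_iff_mul_le (Or.inl hq0) (Or.inl hqt)).2 h2
    refine this.trans (le_of_eq ?_)
    simp only [div_eq_mul_inv]; ring
  calc ‖V x - V x'‖ₑ ^ α ≤ (2 * B / q * I ^ (1/α)) ^ α := by gcongr
    _ = _ := by
      rw [ENNReal.mul_rpow_of_nonneg _ _ hα0.le, ← ENNReal.rpow_mul, one_div,
        inv_mul_cancel₀ hα0.ne', ENNReal.rpow_one]


/-- affine chart -/
noncomputable def auxP {n : ℕ} (x : Eucl n) (s : ℝ) (z : Fin n → ℝ) : Eucl n :=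
  x + s • WithLp.toLp 2 z

theorem aux_toLp_norm {n : ℕ} (z : Fin n → ℝ) :
    ‖(WithLp.toLp 2 z : Eucl n)‖ ≤ n * ‖z‖ := by
  rw [EuclideanSpace.norm_eq, Real.sqrt_le_left (by positivity)]
  calc ∑ i, ‖(WithLp.toLp 2 z : Eucl n) i‖ ^ 2 ≤ ∑ i : Fin n, ‖z‖ ^ 2 := by
        gcongr with i; exact norm_le_pi_norm z i
    _ = n * ‖z‖ ^ 2 := by simp
    _ ≤ (n * ‖z‖) ^ 2 := by
        rw [mul_pow]; gcongr
        have : (n:ℝ) ≤ (n:ℝ)^2 := by exact_mod_cast Nat.le_self_pow (by norm_num) n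
        exact this

theorem auxP_dist {n : ℕ} (x : Eucl n) {s : ℝ} (hs : 0 < s) (a b : Fin n → ℝ) :
    ‖auxP x s b - auxP x s a‖ ≤ s * (n * ‖b - a‖) := by
  have : auxP x s b - auxP x s a = s • (WithLp.toLp 2 (b - a)) := by
    simp only [auxP, WithLp.toLp_sub]; module
  rw [this, norm_smul, Real.norm_of_nonneg hs.le]
  gcongr
  exact aux_toLp_norm _

theorem auxP_mem {n : ℕ} (x : Eucl n) {s : ℝ} (hs : 0 < s) {z : Fin n → ℝ}
    (hz : z ∈ closedBall (0 : Fin n → ℝ) 2) : auxP x s z ∈ closedBall x (2 * n * s) := by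
  have h := auxP_dist x hs 0 z
  rw [mem_closedBall, dist_eq_norm]
  rw [mem_closedBall, dist_zero_right] at hz
  have h0 : auxP x s 0 = x := by simp [auxP]
  rw [h0, sub_zero] at h
  refine h.trans ?_
  calc s * (n * ‖z‖) ≤ s * (n * 2) := by gcongr
    _ = _ := by ring

theorem auxP_cont {n : ℕ} (x : Eucl n) (s : ℝ) : Continuous (auxP x s) := by
  unfold auxP
  have : Continuous (fun z : Fin n → ℝ => (WithLp.toLp 2 z : Eucl n)) := PiLp.continuous_toLp 2 _
  fun_prop

theorem auxP_lintegral {n : ℕ} (x : Eucl n) {s : ℝ} (hs : 0 < s) (g : Eucl n → ℝ≥0∞) :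
    ∫⁻ z in closedBall (0 : Fin n → ℝ) 2, g (auxP x s z) ≤
      ENNReal.ofReal ((s ^ n)⁻¹) * ∫⁻ y in closedBall x (2 * n * s), g y := by
  calc ∫⁻ z in closedBall (0 : Fin n → ℝ) 2, g (auxP x s z)
      ≤ ∫⁻ z, (closedBall x (2 * n * s)).indicator g (auxP x s z) := by
        rw [← lintegral_indicator measurableSet_closedBall]
        refine lintegral_mono fun z => ?_
        by_cases hz : z ∈ closedBall (0 : Fin n → ℝ) 2
        · rw [indicator_of_mem hz, indicator_of_mem (auxP_mem x hs hz)]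
        · rw [indicator_of_notMem hz]; exact zero_le
    _ = ∫⁻ y, (closedBall x (2 * n * s)).indicator g (x + s • y) := by
        exact (PiLp.volume_preserving_toLp (Fin n)).lintegral_comp_emb
          (MeasurableEquiv.toLp 2 (Fin n → ℝ)).measurableEmbedding
          (fun y => (closedBall x (2 * n * s)).indicator g (x + s • y))
    _ = _ := by
        rw [aux_affine volume _ _ hs, lintegral_indicator measurableSet_closedBall]
        simp

theorem aux_insert_mem {d : ℕ} (i : Fin (d+1)) {c : ℝ} (hc : c ∈ Icc (-2:ℝ) 2) {w : Fin d → ℝ}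
    (hw : w ∈ closedBall (0 : Fin d → ℝ) 2) :
    i.insertNth c w ∈ closedBall (0 : Fin (d+1) → ℝ) 2 := by
  rw [mem_closedBall, dist_zero_right, pi_norm_le_iff_of_nonneg (by norm_num)] at hw ⊢
  rw [Fin.forall_iff_succAbove i]
  constructor
  · simpa using abs_le.2 hc
  · intro j; simpa using hw j

theorem aux_slice_smooth (d : ℕ) (hd : 1 ≤ d) (α : ℝ) (hα : (d:ℝ) < α) :
    ∃ C : ℝ≥0∞, C ≠ ⊤ ∧ ∀ (u : Eucl (d+1) → Eucl (d+1)) (_ : ContDiff ℝ 1 u) (x : Eucl (d+1))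
      (s : ℝ) (_ : 0 < s) (i : Fin (d+1)) (c0 : ℝ) (_ : -2 ≤ c0) (_ : c0 + 1 ≤ 2),
      ∃ c ∈ Icc c0 (c0+1), ∀ w ∈ closedBall (0 : Fin d → ℝ) 2, ∀ w' ∈ closedBall (0 : Fin d → ℝ) 2,
        ‖u (auxP x s (i.insertNth c w)) - u (auxP x s (i.insertNth c w'))‖ₑ ^ α ≤
          C * ENNReal.ofReal (s ^ (α - (d+1))) *
            ∫⁻ y in closedBall x (2 * (d+1 : ℕ) * s), ‖fderiv ℝ u y‖ₑ ^ α := by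
  obtain ⟨C, hC, hM⟩ := aux_morrey d hd α hα
  have hα0 : 0 < α := lt_of_le_of_lt (by positivity) hα
  refine ⟨C * ENNReal.ofReal ((4 * (d+1)) ^ α), ENNReal.mul_ne_top hC ENNReal.ofReal_ne_top, ?_⟩
  intro u hu x s hs i c0 hc0 hc1
  set K : ℝ≥0∞ := ENNReal.ofReal (s * (4 * (d+1))) with hK
  set H : (Fin (d+1) → ℝ) → ℝ≥0∞ := fun z => ‖fderiv ℝ u (auxP x s z)‖ₑ * K with hH
  have hHc : Measurable H := by
    have h1 := (hu.continuous_fderiv one_ne_zero).comp (auxP_cont x s)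
    exact (h1.enorm.measurable).mul_const _
  set Qn := closedBall (0 : Fin (d+1) → ℝ) 2
  set Qd := closedBall (0 : Fin d → ℝ) 2
  have hins : Measurable (fun p : ℝ × (Fin d → ℝ) => (i.insertNth p.1 p.2 : Fin (d+1) → ℝ)) :=
    (MeasurableEquiv.piFinSuccAbove (fun _ : Fin (d+1) => ℝ) i).symm.measurable
  set G : ℝ → ℝ≥0∞ := fun c => ∫⁻ w in Qd, H (i.insertNth c w) ^ α with hG
  have hm2 : Measurable (fun p : ℝ × (Fin d → ℝ) => H (i.insertNth p.1 p.2) ^ α) :=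
    (hHc.comp hins).pow_const α
  have hGI : ∫⁻ c in Icc c0 (c0+1), G c ≤ ∫⁻ z in Qn, H z ^ α := by
    rw [hG, ← lintegral_prod (fun p : ℝ × (Fin d → ℝ) => H (i.insertNth p.1 p.2) ^ α)
      hm2.aemeasurable, Measure.prod_restrict,
      ← lintegral_indicator measurableSet_closedBall,
      ← lintegral_indicator (measurableSet_Icc.prod measurableSet_closedBall)]
    have e := (volume_preserving_piFinSuccAbove (fun _ : Fin (d+1) => ℝ) i).symm.lintegral_comp_emb
      (MeasurableEquiv.measurableEmbedding _) (Qn.indicator fun z => H z ^ α)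
    rw [← e]
    refine lintegral_mono fun p => ?_
    by_cases hp : p ∈ Icc c0 (c0+1) ×ˢ Qd
    · have : (i.insertNth p.1 p.2 : Fin (d+1) → ℝ) ∈ Qn :=
        aux_insert_mem i ⟨hc0.trans hp.1.1, hp.1.2.trans hc1⟩ hp.2
      rw [indicator_of_mem hp]
      change _ ≤ Qn.indicator (fun z => H z ^ α) (i.insertNth p.1 p.2)
      rw [indicator_of_mem this]
    · rw [indicator_of_notMem hp]; exact zero_le
  have hvol : (volume.restrict (Icc c0 (c0+1))) univ = 1 := by simp
  have : IsProbabilityMeasure (volume.restrict (Icc c0 (c0+1))) := ⟨hvol⟩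
  obtain ⟨c, hc, hcG⟩ : ∃ c ∈ Icc c0 (c0+1), G c ≤ ∫⁻ z in Qn, H z ^ α := by
    have hGm : Measurable G := hm2.lintegral_prod_right'
    obtain ⟨c, hc, h⟩ := exists_le_setLAverage (μ := volume) (s := Icc c0 (c0+1)) (f := G)
      (by simp) (by simp) hGm.aemeasurable
    refine ⟨c, hc, h.trans (le_trans (le_of_eq ?_) hGI)⟩
    rw [setLAverage_eq]; simp
  refine ⟨c, hc, fun w hw w' hw' => ?_⟩
  have hpath : ∀ x1 ∈ Qd, ∀ z ∈ Qd, ‖u (auxP x s (i.insertNth c z)) - u (auxP x s (i.insertNth c x1))‖ₑ ≤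
      ∫⁻ t in Ioc (0:ℝ) 1, H (i.insertNth c (x1 + t • (z - x1))) := by
    intro x1 hx1 z hz
    refine (aux_path u hu _ _).trans (lintegral_mono fun t => ?_)
    have h1 : (i.insertNth c (x1 + t • (z - x1)) : Fin (d+1) → ℝ) =
        (i.insertNth c x1 : Fin (d+1) → ℝ) + t • ((i.insertNth c z : Fin (d+1) → ℝ) - (i.insertNth c x1 : Fin (d+1) → ℝ)) := by
      ext j
      refine Fin.succAboveCases i ?_ (fun j => ?_) j <;> simp
    have h2 : auxP x s (i.insertNth c (x1 + t • (z - x1))) = auxP x s (i.insertNth c x1) +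
        t • (auxP x s (i.insertNth c z) - auxP x s (i.insertNth c x1)) := by
      rw [h1]; simp only [auxP, WithLp.toLp_sub, WithLp.toLp_add, WithLp.toLp_smul]; module
    simp only [hH]
    rw [h2]
    gcongr
    rw [hK, ← ofReal_norm]
    apply ENNReal.ofReal_le_ofReal
    refine (auxP_dist x hs _ _).trans ?_
    have hcc : c ∈ Icc (-2:ℝ) 2 := ⟨hc0.trans hc.1, hc.2.trans hc1⟩
    have h3 := aux_insert_mem i hcc hx1
    have h4 := aux_insert_mem i hcc hz
    rw [mem_closedBall, dist_zero_right] at h3 h4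
    have h5 : ‖(i.insertNth c z : Fin (d+1) → ℝ) - (i.insertNth c x1 : Fin (d+1) → ℝ)‖ ≤ 4 :=
      (norm_sub_le _ _).trans (by linarith)
    push_cast
    calc s * (((d:ℝ)+1) * _) ≤ s * ((d+1) * 4) := by gcongr
      _ = _ := by ring
  have hmw : Measurable fun w : Fin d → ℝ => H (i.insertNth c w) :=
    hHc.comp (hins.comp (by fun_prop : Measurable fun w : Fin d → ℝ => (c, w)))
  have := hM (Eucl (d+1)) (fun w => H (i.insertNth c w)) hmw
    (fun w => u (auxP x s (i.insertNth c w))) hpath w hw w' hw'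
  refine this.trans ?_
  have h6 : ∫⁻ z in Qn, H z ^ α ≤ K ^ α * (ENNReal.ofReal ((s ^ (d+1))⁻¹) *
      ∫⁻ y in closedBall x (2 * (d+1 : ℕ) * s), ‖fderiv ℝ u y‖ₑ ^ α) := by
    calc ∫⁻ z in Qn, H z ^ α = ∫⁻ z in Qn, K ^ α * ‖fderiv ℝ u (auxP x s z)‖ₑ ^ α := by
          congr 1; ext z; simp only [hH]; rw [ENNReal.mul_rpow_of_nonneg _ _ hα0.le, mul_comm]
      _ = K ^ α * ∫⁻ z in Qn, ‖fderiv ℝ u (auxP x s z)‖ₑ ^ α := by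
          rw [lintegral_const_mul' _ _ (ENNReal.rpow_ne_top_of_nonneg hα0.le ENNReal.ofReal_ne_top)]
      _ ≤ _ := by
          gcongr
          exact auxP_lintegral x hs (fun y => ‖fderiv ℝ u y‖ₑ ^ α)
  calc C * G c ≤ C * (K ^ α * (ENNReal.ofReal ((s ^ (d+1))⁻¹) *
      ∫⁻ y in closedBall x (2 * (d+1 : ℕ) * s), ‖fderiv ℝ u y‖ₑ ^ α)) := by
        gcongr; exact hcG.trans h6
    _ = _ := by
        have h7 : K ^ α * ENNReal.ofReal ((s ^ (d+1))⁻¹) =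
            ENNReal.ofReal ((4 * (d+1)) ^ α) * ENNReal.ofReal (s ^ (α - (d+1))) := by
          rw [hK, ENNReal.ofReal_rpow_of_pos (by positivity), ← ENNReal.ofReal_mul (by positivity),
            ← ENNReal.ofReal_mul (by positivity)]
          congr 1
          rw [Real.mul_rpow hs.le (by positivity), Real.rpow_sub hs, ← Nat.cast_add_one,
            Real.rpow_natCast]
          field_simp
        rw [← mul_assoc (K ^ α), h7]
        ring


theorem aux_mollify {n : ℕ} {D : Set (Eucl n)} {f : Eucl n → Eucl n}
    {Df : Eucl n → Eucl n →L[ℝ] Eucl n} (hf : ContinuousOn f D) (hw : IsWeakDerivOn D f Df)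
    {α : ℝ} (hα : 1 < α) {x : Eucl n} {R' R : ℝ} (hR : R' < R) (hK : closedBall x R ⊆ D)
    {η : ℝ} (hη : 0 < η) :
    ∃ v : Eucl n → Eucl n, ContDiff ℝ 1 v ∧ (∀ y ∈ closedBall x R', ‖v y - f y‖ ≤ η) ∧
      ∀ L : Eucl n →L[ℝ] Eucl n, ∫⁻ y in closedBall x R', ‖fderiv ℝ v y - L‖ₑ ^ α ≤
        ∫⁻ y in closedBall x R, ‖Df y - L‖ₑ ^ α := by
  have hα0 : 0 < α := by linarith
  obtain ⟨hfl, hDl, hweak⟩ := hw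
  set K := closedBall x R with hKdef
  have hKc : IsCompact K := isCompact_closedBall _ _
  have hKm : MeasurableSet K := measurableSet_closedBall
  have huc : UniformContinuousOn f K := hKc.uniformContinuousOn_of_continuous (hf.mono hK)
  obtain ⟨δ, hδ, hδf⟩ := Metric.uniformContinuousOn_iff_le.1 huc η hη
  set r : ℝ := min δ (R - R') with hr
  have hr0 : 0 < r := lt_min hδ (by linarith)
  have hrδ : r ≤ δ := min_le_left _ _
  have hrR : r ≤ R - R' := min_le_right _ _
  let φ : ContDiffBump (0 : Eucl n) := ⟨r/2, r, by positivity, by linarith⟩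
  set g : Eucl n → ℝ := φ.normed volume with hg
  have hgc : HasCompactSupport g := φ.hasCompactSupport_normed
  have hgs : ContDiff ℝ (⊤ : ℕ∞) g := φ.contDiff_normed
  have hgs1 : ContDiff ℝ 1 g := hgs.of_le (by exact_mod_cast le_top)
  have hgcont : Continuous g := hgs.continuous
  have hg0 : ∀ z, 0 ≤ g z := fun z => φ.nonneg_normed z
  have hgint : ∫ z, g z = 1 := φ.integral_normed
  have hgts : tsupport g = closedBall 0 r := φ.tsupport_normed_eq
  have hgI : Integrable g := hgcont.integrable_of_hasCompactSupport hgc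
  have hglint : ∫⁻ z, ENNReal.ofReal (g z) = 1 := by
    rw [← ofReal_integral_eq_lintegral_ofReal hgI (Eventually.of_forall hg0), hgint]
    simp
  have hfK : Integrable (K.indicator f) := by
    rw [integrable_indicator_iff hKm]
    exact hfl.integrableOn_compact_subset hK hKc
  have hDK : Integrable (K.indicator Df) := by
    refine (integrable_indicator_iff (f := Df) hKm).2 ?_
    exact hDl.integrableOn_compact_subset hK hKc
  have hin : ∀ y ∈ closedBall x R', ∀ z, y - z ∈ tsupport g → z ∈ K := by
    intro y hy z hz
    rw [hgts, mem_closedBall_zero_iff] at hz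
    rw [hKdef, mem_closedBall, dist_eq_norm] at *
    calc ‖z - x‖ = ‖(y - x) - (y - z)‖ := by congr 1; abel
      _ ≤ ‖y - x‖ + ‖y - z‖ := norm_sub_le _ _
      _ ≤ R := by linarith
  set v := convolution g (K.indicator f) (ContinuousLinearMap.lsmul ℝ ℝ) volume with hv
  have hfd : ∀ y ∈ closedBall x R', ∀ L, fderiv ℝ v y - L = ∫ z, g (y - z) • K.indicator (fun z => Df z - L) z := by
    intro y hy L
    have hL : Integrable (K.indicator (fun z => Df z - L)) := by
      refine (integrable_indicator_iff (f := fun z => Df z - L) hKm).2 ?_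
      exact (hDl.integrableOn_compact_subset hK hKc).sub (integrableOn_const hKc.measure_lt_top.ne)
    set ψ : Eucl n → ℝ := fun z => g (y - z) with hψ
    have hψs : ContDiff ℝ (⊤ : ℕ∞) ψ := hgs.comp (contDiff_const.sub contDiff_id)
    have hψc : HasCompactSupport ψ := hgc.comp_homeomorph (Homeomorph.subLeft y)
    have hψK : tsupport ψ ⊆ K := by
      refine closure_minimal ?_ hKc.isClosed
      intro z hz
      exact hin y hy z (subset_tsupport _ hz)
    have hI : ∀ G : Eucl n → Eucl n →L[ℝ] Eucl n, Integrable G → Integrable (fun z => ψ z • G z) := by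
      intro G hG
      exact hG.locallyIntegrable.integrable_smul_left_of_hasCompactSupport hψs.continuous hψc
    ext1 w
    rw [ContinuousLinearMap.integral_apply (hI _ hL)]
    have h1 := HasCompactSupport.hasFDerivAt_convolution_left (ContinuousLinearMap.lsmul ℝ ℝ) hgc hgs1
      hfK.locallyIntegrable y
    have hfdI : Integrable (fun z => (ContinuousLinearMap.precompL (Eucl n) (ContinuousLinearMap.lsmul ℝ ℝ : ℝ →L[ℝ] Eucl n →L[ℝ] Eucl n)) (fderiv ℝ g (y - z)) (K.indicator f z)) := by
      have := (HasCompactSupport.convolutionExists_left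
        (ContinuousLinearMap.precompL (Eucl n) (ContinuousLinearMap.lsmul ℝ ℝ : ℝ →L[ℝ] Eucl n →L[ℝ] Eucl n)) (hgc.fderiv ℝ)
        (hgs1.continuous_fderiv one_ne_zero) hfK.locallyIntegrable y).integrable_swap
      exact this
    rw [h1.fderiv, convolution_eq_swap, _root_.sub_apply, ContinuousLinearMap.integral_apply hfdI]
    simp only [ContinuousLinearMap.precompL_apply, ContinuousLinearMap.lsmul_apply]
    have h2 : ∀ z, (fderiv ℝ g (y - z) w) • K.indicator f z = - (fderiv ℝ ψ z w • f z) := by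
      intro z
      have hψz : fderiv ℝ ψ z w = - fderiv ℝ g (y - z) w := by
        have ha : HasFDerivAt (fun z : Eucl n => y - z) (-(ContinuousLinearMap.id ℝ (Eucl n))) z := by
          simpa using (hasFDerivAt_id z).const_sub y
        have hb : HasFDerivAt g (fderiv ℝ g (y - z)) (y - z) :=
          (hgs1.differentiable one_ne_zero _).hasFDerivAt
        have := hb.comp z ha
        rw [show ψ = g ∘ (fun z => y - z) from rfl, this.fderiv]
        simp
      rw [hψz]
      by_cases hz : z ∈ K
      · rw [indicator_of_mem hz]; simp
      · have : fderiv ℝ g (y - z) = 0 := by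
          by_contra hne
          exact hz (hin y hy z (support_fderiv_subset ℝ hne))
        simp [this]
    simp_rw [h2]
    rw [integral_neg, ← hweak ψ hψs hψc (hψK.trans hK) w]
    have h3 : ∀ z, (ψ z • K.indicator (fun z => Df z - L) z) w = ψ z • Df z w - ψ z • L w := by
      intro z
      by_cases hz : z ∈ K
      · rw [indicator_of_mem hz]; simp [smul_sub]
      · have : ψ z = 0 := by
          by_contra hne
          exact hz (hψK (subset_tsupport _ hne))
        simp [this]
    simp_rw [h3]
    rw [integral_sub, integral_smul_const]
    · congr 1
      have : ∫ z, ψ z = 1 := by rw [hψ, integral_sub_left_eq_self g, hgint]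
      rw [this, one_smul]
    · have := (hI _ hDK).apply_continuousLinearMap w
      refine this.congr (Eventually.of_forall fun z => ?_)
      by_cases hz : z ∈ K
      · simp [indicator_of_mem hz]
      · have : ψ z = 0 := by
          by_contra hne
          exact hz (hψK (subset_tsupport _ hne))
        simp [this]
    · exact (hψs.continuous.integrable_of_hasCompactSupport hψc).smul_const _
  refine ⟨v, ?_, ?_, ?_⟩
  · exact_mod_cast HasCompactSupport.contDiff_convolution_left (n := 1) (ContinuousLinearMap.lsmul ℝ ℝ) hgc
      (by exact_mod_cast hgs1) hfK.locallyIntegrable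
  · intro y hy
    have hyK : y ∈ K := closedBall_subset_closedBall hR.le hy
    have := φ.dist_normed_convolution_le (μ := volume) (g := K.indicator f) (x₀ := y) (ε := η) hfK.aestronglyMeasurable ?_
    · rw [indicator_of_mem hyK, dist_eq_norm] at this
      exact this
    · intro z hz
      have hz' : dist z y < r := hz
      have hzK : z ∈ K := by
        apply hin y hy z
        rw [hgts, mem_closedBall_zero_iff, ← dist_eq_norm, dist_comm]
        exact hz'.le
      rw [indicator_of_mem hzK, indicator_of_mem hyK]
      exact hδf z hzK y hyK (by linarith)
  · intro L
    set h : Eucl n → ℝ≥0∞ := K.indicator (fun z => ‖Df z - L‖ₑ) with hh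
    have hhm : AEMeasurable h := by
      rw [hh, aemeasurable_indicator_iff hKm]
      exact ((hDl.integrableOn_compact_subset hK hKc).aestronglyMeasurable.sub
        aestronglyMeasurable_const).enorm
    have hgm : Measurable (fun z => ENNReal.ofReal (g z)) := by fun_prop
    have hpt : ∀ y ∈ closedBall x R', ‖fderiv ℝ v y - L‖ₑ ^ α ≤
        ∫⁻ z, ENNReal.ofReal (g (y - z)) * h z ^ α := by
      intro y hy
      have hgm' : Measurable (fun z => ENNReal.ofReal (g (y - z))) := hgm.comp (by fun_prop)
      set μ := (volume : Measure (Eucl n)).withDensity (fun z => ENNReal.ofReal (g (y - z))) with hμ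
      have hμ1 : μ univ = 1 := by
        rw [hμ, withDensity_apply _ MeasurableSet.univ, setLIntegral_univ,
          lintegral_sub_left_eq_self (fun z => ENNReal.ofReal (g z)), hglint]
      have hac : μ ≪ volume := withDensity_absolutelyContinuous _ _
      have h1 := aux_holder μ hα (hhm.mono_ac hac)
      rw [hμ1, ENNReal.one_rpow, mul_one] at h1
      have h2 : ‖fderiv ℝ v y - L‖ₑ ≤ ∫⁻ z, h z ∂μ := by
        rw [hfd y hy L, hμ, lintegral_withDensity_eq_lintegral_mul₀ hgm'.aemeasurable hhm]
        refine (enorm_integral_le_lintegral_enorm _).trans (lintegral_mono fun z => ?_)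
        rw [enorm_smul, Real.enorm_eq_ofReal (hg0 _), hh]
        simp only [Pi.mul_apply]
        gcongr
        by_cases hz : z ∈ K <;> simp [hz]
      calc ‖fderiv ℝ v y - L‖ₑ ^ α ≤ ((∫⁻ z, h z ^ α ∂μ) ^ (1 / α)) ^ α := by
            gcongr; exact h2.trans h1
        _ = ∫⁻ z, h z ^ α ∂μ := by
            rw [← ENNReal.rpow_mul, one_div, inv_mul_cancel₀ hα0.ne', ENNReal.rpow_one]
        _ = _ := by
            rw [hμ, lintegral_withDensity_eq_lintegral_mul₀ hgm'.aemeasurable (hhm.pow_const _)]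
            rfl
    calc ∫⁻ y in closedBall x R', ‖fderiv ℝ v y - L‖ₑ ^ α
        ≤ ∫⁻ y in closedBall x R', ∫⁻ z, ENNReal.ofReal (g (y - z)) * h z ^ α :=
          setLIntegral_mono' measurableSet_closedBall hpt
      _ ≤ ∫⁻ y, ∫⁻ z, ENNReal.ofReal (g (y - z)) * h z ^ α := setLIntegral_le_lintegral _ _
      _ = ∫⁻ z, ∫⁻ y, ENNReal.ofReal (g (y - z)) * h z ^ α := by
          rw [lintegral_lintegral_swap]
          refine AEMeasurable.mul ?_ ?_
          · exact (hgm.comp (measurable_fst.sub measurable_snd)).aemeasurable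
          · exact (hhm.pow_const α).comp_snd
      _ = ∫⁻ z, h z ^ α := by
          refine lintegral_congr fun z => ?_
          rw [lintegral_mul_const _ (by fun_prop),
            lintegral_sub_right_eq_self (fun y => ENNReal.ofReal (g y)), hglint, one_mul]
      _ = _ := by
          rw [← lintegral_indicator hKm]
          refine lintegral_congr fun z => ?_
          by_cases hz : z ∈ K <;> simp [hh, hz, hα0]


theorem aux_slice (d : ℕ) (hd : 1 ≤ d) (α : ℝ) (hα : (d:ℝ) < α) :
    ∃ C : ℝ≥0∞, C ≠ ⊤ ∧ ∀ (D : Set (Eucl (d+1))) (f : Eucl (d+1) → Eucl (d+1))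
      (Df : Eucl (d+1) → Eucl (d+1) →L[ℝ] Eucl (d+1)) (_ : ContinuousOn f D)
      (_ : IsWeakDerivOn D f Df) (x : Eucl (d+1))
      (s : ℝ) (_ : 0 < s) (_ : closedBall x ((2 * (d+1 : ℕ) + 1) * s) ⊆ D)
      (L : Eucl (d+1) →L[ℝ] Eucl (d+1))
      (i : Fin (d+1)) (c0 : ℝ) (_ : -2 ≤ c0) (_ : c0 + 1 ≤ 2),
      ∃ c ∈ Icc c0 (c0+1), ∀ z ∈ closedBall (0 : Fin (d+1) → ℝ) 2,
        ∀ z' ∈ closedBall (0 : Fin (d+1) → ℝ) 2, z i = c → z' i = c →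
        ‖(f (auxP x s z) - L (auxP x s z)) - (f (auxP x s z') - L (auxP x s z'))‖ₑ ^ α ≤
          C * ENNReal.ofReal (s ^ (α - (d+1))) *
            ∫⁻ y in closedBall x ((2 * (d+1 : ℕ) + 1) * s), ‖Df y - L‖ₑ ^ α := by
  obtain ⟨C, hC, hS⟩ := aux_slice_smooth d hd α hα
  have hd1 : (1:ℝ) ≤ d := by exact_mod_cast hd
  have hα1 : 1 < α := by linarith
  have hα0 : 0 < α := by linarith
  refine ⟨C, hC, ?_⟩
  intro D f Df hf hw x s hs hK L i c0 hc0 hc1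
  have hRR : 2 * (d+1 : ℕ) * s < (2 * (d+1 : ℕ) + 1) * s := by nlinarith
  have hη : ∀ k : ℕ, (0:ℝ) < 1 / ((k:ℝ) + 1) := fun k => by positivity
  choose v hv1 hv2 hv3 using fun k : ℕ => aux_mollify hf hw hα1 hRR hK (hη k)
  have hu1 : ∀ k, ContDiff ℝ 1 (fun y => v k y - L y) := fun k => (hv1 k).sub L.contDiff
  choose c hcI hcw using fun k : ℕ => hS _ (hu1 k) x s hs i c0 hc0 hc1
  obtain ⟨c', hc'I, φ, hφ, hlim⟩ := isCompact_Icc.tendsto_subseq hcI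
  refine ⟨c', hc'I, ?_⟩
  intro z hz z' hz' hzi hzi'
  set I : ℝ≥0∞ := ∫⁻ y in closedBall x ((2 * (d+1 : ℕ) + 1) * s), ‖Df y - L‖ₑ ^ α with hI
  have hrem : ∀ z : Fin (d+1) → ℝ, z ∈ closedBall (0 : Fin (d+1) → ℝ) 2 →
      i.removeNth z ∈ closedBall (0 : Fin d → ℝ) 2 := by
    intro z hz
    rw [mem_closedBall, dist_zero_right, pi_norm_le_iff_of_nonneg (by norm_num)] at hz ⊢
    intro j
    exact hz (i.succAbove j)
  have hcI' : ∀ k, c k ∈ Icc (-2:ℝ) 2 := fun k => ⟨by linarith [(hcI k).1], by linarith [(hcI k).2]⟩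
  have key : ∀ z ∈ closedBall (0 : Fin (d+1) → ℝ) 2, z i = c' →
      Tendsto (fun k => v (φ k) (auxP x s (i.insertNth (c (φ k)) (i.removeNth z))) -
        L (auxP x s (i.insertNth (c (φ k)) (i.removeNth z)))) atTop
        (𝓝 (f (auxP x s z) - L (auxP x s z))) := by
    intro z hz hzi
    have hzz : auxP x s (i.insertNth c' (i.removeNth z)) = auxP x s z := by
      rw [← hzi, Fin.insertNth_self_removeNth]
    have ht1 : Tendsto (fun k => auxP x s (i.insertNth (c (φ k)) (i.removeNth z))) atTop
        (𝓝 (auxP x s z)) := by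
      rw [← hzz]
      have hc : Continuous (fun t : ℝ => auxP x s (i.insertNth t (i.removeNth z))) := by
        refine (auxP_cont x s).comp ?_
        exact Continuous.finInsertNth i continuous_id continuous_const
      exact (hc.tendsto c').comp hlim
    have hmem : ∀ k, auxP x s (i.insertNth (c (φ k)) (i.removeNth z)) ∈ closedBall x (2 * (d+1 : ℕ) * s) :=
      fun k => auxP_mem x hs (aux_insert_mem i (hcI' _) (hrem z hz))
    refine Tendsto.sub ?_ ((L.continuous.tendsto _).comp ht1)
    have hsub : closedBall x (2 * (d+1 : ℕ) * s) ⊆ D :=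
      (closedBall_subset_closedBall hRR.le).trans hK
    have ht2 : Tendsto (fun k => f (auxP x s (i.insertNth (c (φ k)) (i.removeNth z)))) atTop
        (𝓝 (f (auxP x s z))) := by
      have hc := hf.mono hsub (auxP x s z) (auxP_mem x hs hz)
      exact hc.tendsto.comp (tendsto_nhdsWithin_iff.2 ⟨ht1, Eventually.of_forall hmem⟩)
    have ht3 : Tendsto (fun k => v (φ k) (auxP x s (i.insertNth (c (φ k)) (i.removeNth z))) -
        f (auxP x s (i.insertNth (c (φ k)) (i.removeNth z)))) atTop (𝓝 0) := by
      refine squeeze_zero_norm (fun k => hv2 (φ k) _ (hmem k)) ?_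
      exact tendsto_one_div_add_atTop_nhds_zero_nat.comp hφ.tendsto_atTop
    simpa using ht3.add ht2
  have hlim2 := ((key z hz hzi).sub (key z' hz' hzi')).enorm
  have hlim3 := (ENNReal.continuous_rpow_const (y := α)).tendsto _ |>.comp hlim2
  refine le_of_tendsto hlim3 (Eventually.of_forall fun k => ?_)
  refine (hcw (φ k) _ (hrem z hz) _ (hrem z' hz')).trans ?_
  gcongr
  refine le_trans (le_of_eq ?_) (hv3 (φ k) L)
  refine lintegral_congr fun y => ?_
  rw [fderiv_fun_sub ((hv1 (φ k)).differentiable one_ne_zero y) L.differentiableAt, L.fderiv]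


theorem aux_farther {E : Type*} [NormedAddCommGroup E] [NormedSpace ℝ E] [Nontrivial E]
    {V : Set E} (hV : IsOpen V) {a : E} (ha : a ∈ V) (b : E) : ∃ y ∈ V, ‖a - b‖ < ‖y - b‖ := by
  obtain ⟨e, he, hlt⟩ : ∃ e : E, e ≠ 0 ∧ ∀ t : ℝ, 0 < t → ‖a - b‖ < ‖(a + t • e) - b‖ := by
    by_cases hab : a = b
    · obtain ⟨e, he⟩ := exists_ne (0 : E)
      refine ⟨e, he, fun t ht => ?_⟩
      subst hab
      simp [norm_smul, ht.ne', he]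
    · have h0 : 0 < ‖a - b‖ := norm_pos_iff.2 (sub_ne_zero.2 hab)
      refine ⟨a - b, sub_ne_zero.2 hab, fun t ht => ?_⟩
      have : (a + t • (a - b)) - b = (1 + t) • (a - b) := by module
      rw [this, norm_smul, Real.norm_of_nonneg (by linarith)]
      nlinarith
  have hc : Tendsto (fun t : ℝ => a + t • e) (𝓝[>] 0) (𝓝 a) := by
    have : Continuous (fun t : ℝ => a + t • e) := by fun_prop
    have h := this.tendsto 0
    simp only [zero_smul, add_zero] at h
    exact h.mono_left nhdsWithin_le_nhds
  obtain ⟨t, ht1, ht2⟩ := ((hc.eventually (hV.mem_nhds ha)).and self_mem_nhdsWithin).exists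
  exact ⟨_, ht1, hlt t ht2⟩

theorem auxP_surj {n : ℕ} (x : Eucl n) {s : ℝ} (hs : 0 < s) (y : Eucl n) :
    auxP x s (fun i => s⁻¹ * (y i - x i)) = y := by
  ext i
  simp [auxP]
  field_simp
  ring

theorem auxP_inv {n : ℕ} (x : Eucl n) {s : ℝ} (hs : 0 < s) (z : Fin n → ℝ) (i : Fin n) :
    s⁻¹ * ((auxP x s z) i - x i) = z i := by
  simp [auxP]
  field_simp

theorem aux_osc (d : ℕ) (hd : 2 ≤ d) (α : ℝ) (hα : (d:ℝ) < α) :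
    ∃ C : ℝ≥0∞, C ≠ ⊤ ∧ ∀ (D D' : Set (Eucl (d+1))) (f : Eucl (d+1) → Eucl (d+1))
      (Df : Eucl (d+1) → Eucl (d+1) →L[ℝ] Eucl (d+1)) (_ : IsHomeoOn f D D')
      (_ : IsWeakDerivOn D f Df) (x : Eucl (d+1))
      (s : ℝ) (_ : 0 < s) (_ : closedBall x ((2 * (d+1 : ℕ) + 1) * s) ⊆ D),
      ∀ p ∈ closedBall x s, ∀ q ∈ closedBall x s,
        ‖f p - f q‖ₑ ^ α ≤ C * ENNReal.ofReal (s ^ (α - (d+1))) *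
            ∫⁻ y in closedBall x ((2 * (d+1 : ℕ) + 1) * s), ‖Df y‖ₑ ^ α := by
  obtain ⟨C, hC, hS⟩ := aux_slice d (by omega) α hα
  have hα0 : 0 < α := lt_of_le_of_lt (by positivity) hα
  refine ⟨3 ^ α * C, ENNReal.mul_ne_top (ENNReal.rpow_ne_top_of_nonneg hα0.le (by simp)) hC, ?_⟩
  intro D D' f Df hf hw x s hs hK
  have hS' := hS D f Df hf.continuousOn hw x s hs hK 0
  simp only [sub_zero, _root_.zero_apply] at hS'
  choose cp hcp hp using fun i => hS' i 1 (by norm_num) (by norm_num)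
  choose cm hcm hm using fun i => hS' i (-2) (by norm_num) (by norm_num)
  set T : ℝ≥0∞ := C * ENNReal.ofReal (s ^ (α - (d+1))) *
            ∫⁻ y in closedBall x ((2 * (d+1 : ℕ) + 1) * s), ‖Df y‖ₑ ^ α with hT
  set b : ℝ≥0∞ := T ^ (1/α) with hb
  have hle : ∀ a : ℝ≥0∞, a ^ α ≤ T → a ≤ b := by
    intro a ha
    rw [hb, one_div, ENNReal.le_rpow_inv_iff hα0]
    exact ha
  set Q : Set (Fin (d+1) → ℝ) := Icc cm cp with hQ
  have hQ2 : Q ⊆ closedBall (0 : Fin (d+1) → ℝ) 2 := by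
    intro z hz
    rw [mem_closedBall, dist_zero_right, pi_norm_le_iff_of_nonneg (by norm_num)]
    intro i
    rw [Real.norm_eq_abs, abs_le]
    have h1 := hz.1 i; have h2 := hz.2 i
    have h3 := (hcp i).2; have h4 := (hcm i).1
    constructor <;> linarith
  have hcpm : cm ≤ cp := fun i => by
    have h3 := (hcp i).1; have h4 := (hcm i).2
    linarith
  have hQD : ∀ z ∈ Q, auxP x s z ∈ D := fun z hz => hK (by
    refine closedBall_subset_closedBall ?_ (auxP_mem x hs (hQ2 hz))
    nlinarith)
  -- slice comparisons
  have hsl : ∀ z ∈ Q, ∀ z' ∈ Q, ∀ i, (z i = cm i ∧ z' i = cm i) ∨ (z i = cp i ∧ z' i = cp i) →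
      ‖f (auxP x s z) - f (auxP x s z')‖ₑ ≤ b := by
    rintro z hz z' hz' i (⟨h1, h2⟩ | ⟨h1, h2⟩)
    · exact hle _ (hm i z (hQ2 hz) z' (hQ2 hz') h1 h2)
    · exact hle _ (hp i z (hQ2 hz) z' (hQ2 hz') h1 h2)
  have hup : ∀ z ∈ Q, ∀ k, Function.update z k (cp k) ∈ Q := by
    intro z hz k
    constructor
    · intro i
      by_cases hik : i = k
      · subst hik; simpa using hcpm i
      · simpa [hik] using hz.1 i
    · intro i
      by_cases hik : i = k
      · subst hik; simp
      · simpa [hik] using hz.2 i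
  have hbd : ∀ z ∈ Q, ∀ z' ∈ Q, (∃ i, z i = cm i ∨ z i = cp i) → (∃ j, z' j = cm j ∨ z' j = cp j) →
      ‖f (auxP x s z) - f (auxP x s z')‖ₑ ≤ 3 * b := by
    rintro z hz z' hz' ⟨i, hi⟩ ⟨j, hj⟩
    obtain ⟨k, hki, hkj⟩ : ∃ k : Fin (d+1), k ≠ i ∧ k ≠ j := by
      have : ∃ k ∉ ({i, j} : Finset (Fin (d+1))), True := by
        by_contra hcon
        push Not at hcon
        have h2 : (Finset.univ : Finset (Fin (d+1))) ⊆ {i, j} := fun k _ => by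
          by_contra hk
          exact hcon k hk
        have h3 := Finset.card_le_card h2
        have h4 := Finset.card_le_two (a := i) (b := j)
        simp at h3
        omega
      obtain ⟨k, hk, -⟩ := this
      simp at hk
      exact ⟨k, hk.1, hk.2⟩
    have e1 := hsl z hz _ (hup z hz k) i (by
      rcases hi with hi | hi
      · left; simp [hi, hki.symm]
      · right; simp [hi, hki.symm])
    have e2 := hsl _ (hup z hz k) _ (hup z' hz' k) k (by right; simp)
    have e3 := hsl _ (hup z' hz' k) z' hz' j (by
      rcases hj with hj | hj
      · left; simp [hj, hkj.symm]
      · right; simp [hj, hkj.symm])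
    simp only [← edist_eq_enorm_sub] at e1 e2 e3 ⊢
    refine (edist_triangle4 _ _ _ _).trans ((add_le_add_three e1 e2 e3).trans (le_of_eq ?_))
    ring
  have hQc : IsCompact (Q ×ˢ Q) := isCompact_Icc.prod isCompact_Icc
  have hfc : ContinuousOn (fun z => f (auxP x s z)) Q :=
    hf.continuousOn.comp (auxP_cont x s).continuousOn hQD
  have hΦ : ContinuousOn (fun zz : (Fin (d+1) → ℝ) × (Fin (d+1) → ℝ) =>
      ‖f (auxP x s zz.1) - f (auxP x s zz.2)‖) (Q ×ˢ Q) := by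
    refine ContinuousOn.norm (ContinuousOn.sub ?_ ?_)
    · exact hfc.comp continuous_fst.continuousOn (fun zz hz => hz.1)
    · exact hfc.comp continuous_snd.continuousOn (fun zz hz => hz.2)
  have hcmQ : cm ∈ Q := ⟨le_rfl, hcpm⟩
  obtain ⟨⟨z, z'⟩, ⟨hz, hz'⟩, hmax⟩ := hQc.exists_isMaxOn ⟨(cm, cm), hcmQ, hcmQ⟩ hΦ
  simp only at hz hz'
  -- interior
  set U : Set (Eucl (d+1)) := {y | ∀ i, cm i < s⁻¹ * (y i - x i) ∧ s⁻¹ * (y i - x i) < cp i} with hU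
  have hUo : IsOpen U := by
    rw [hU]
    simp only [ofPred_forall]
    refine isOpen_iInter_of_finite fun i => ?_
    have hc : Continuous (fun y : Eucl (d+1) => s⁻¹ * (y i - x i)) := by fun_prop
    exact (isOpen_lt continuous_const hc).inter (isOpen_lt hc continuous_const)
  have hUQ : ∀ y ∈ U, ∃ z ∈ Q, auxP x s z = y := fun y hy =>
    ⟨_, ⟨fun i => (hy i).1.le, fun i => (hy i).2.le⟩, auxP_surj x hs y⟩
  have hUD : U ⊆ D := fun y hy => by
    obtain ⟨z, hz, rfl⟩ := hUQ y hy
    exact hQD z hz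
  have hfU := hf.isOpenMapOn U hUD hUo
  have hint : ∀ z ∈ Q, (¬ ∃ i, z i = cm i ∨ z i = cp i) → auxP x s z ∈ U := by
    intro z hz hne i
    push Not at hne
    rw [auxP_inv x hs z i]
    exact ⟨lt_of_le_of_ne (hz.1 i) (hne i).1.symm, lt_of_le_of_ne (hz.2 i) (hne i).2⟩
  have : Nontrivial (Eucl (d+1)) := by
    have : Nonempty (Fin (d+1)) := ⟨0⟩
    infer_instance
  have hb1 : ∃ i, z i = cm i ∨ z i = cp i := by
    by_contra hne
    obtain ⟨y, ⟨y', hy', rfl⟩, hy⟩ := aux_farther hfU (mem_image_of_mem f (hint z hz hne)) (f (auxP x s z'))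
    obtain ⟨w, hw, rfl⟩ := hUQ y' hy'
    have := hmax (show (w, z') ∈ Q ×ˢ Q from ⟨hw, hz'⟩)
    simp only [mem_ofPred_eq] at this
    linarith
  have hb2 : ∃ i, z' i = cm i ∨ z' i = cp i := by
    by_contra hne
    obtain ⟨y, ⟨y', hy', rfl⟩, hy⟩ := aux_farther hfU (mem_image_of_mem f (hint z' hz' hne)) (f (auxP x s z))
    obtain ⟨w, hw, rfl⟩ := hUQ y' hy'
    have := hmax (show (z, w) ∈ Q ×ˢ Q from ⟨hz, hw⟩)
    simp only [mem_ofPred_eq] at this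
    rw [norm_sub_rev, norm_sub_rev (f (auxP x s w))] at hy
    linarith
  have hfin := hbd z hz z' hz' hb1 hb2
  have hball : ∀ p ∈ closedBall x s, ∃ w ∈ Q, auxP x s w = p := by
    intro p hp
    refine ⟨_, ⟨fun i => ?_, fun i => ?_⟩, auxP_surj x hs p⟩
    all_goals
      have h1 : |p i - x i| ≤ s := by
        have := PiLp.norm_apply_le (p - x) i
        rw [mem_closedBall, dist_eq_norm] at hp
        simpa using this.trans hp
      have h2 : |s⁻¹ * (p i - x i)| ≤ 1 := by
        rw [abs_mul, abs_of_pos (inv_pos.2 hs), inv_mul_le_iff₀ hs]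
        simpa using h1
      have h3 := abs_le.1 h2
      have h4 := (hcp i).1; have h5 := (hcm i).2
      simp only
      linarith [h3.1, h3.2]
  intro p hp q hq
  obtain ⟨w, hw, rfl⟩ := hball p hp
  obtain ⟨w', hw', rfl⟩ := hball q hq
  have h1 : ‖f (auxP x s w) - f (auxP x s w')‖ₑ ≤ 3 * b := by
    refine le_trans ?_ hfin
    have := hmax (show (w, w') ∈ Q ×ˢ Q from ⟨hw, hw'⟩)
    simp only [mem_ofPred_eq] at this
    exact enorm_le_iff_norm_le.2 this
  calc _ ≤ (3 * b) ^ α := by gcongr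
    _ = 3 ^ α * T := by
      rw [ENNReal.mul_rpow_of_nonneg _ _ hα0.le, hb, ← ENNReal.rpow_mul, one_div,
        inv_mul_cancel₀ hα0.ne', ENNReal.rpow_one]
    _ = _ := by rw [hT]; ring


theorem aux_ae_local {n : ℕ} {D : Set (Eucl n)} (hD : IsOpen D) {P : Eucl n → Prop}
    (h : ∀ c ∈ D, ∃ r > 0, ∀ᵐ x, x ∈ ball c r → P x) : ∀ᵐ x ∂(volume.restrict D), P x := by
  rw [ae_restrict_iff' hD.measurableSet, ae_iff]
  refine measure_null_of_locally_null _ fun c hc => ?_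
  have hcD : c ∈ D := by
    by_contra hn
    exact hc (fun h => absurd h hn)
  obtain ⟨r, hr, hP⟩ := h c hcD
  refine ⟨{x | ¬ (x ∈ ball c r → P x)}, ?_, ae_iff.1 hP⟩
  rw [mem_nhdsWithin]
  refine ⟨ball c r, isOpen_ball, mem_ball_self hr, ?_⟩
  rintro x ⟨hx, hx2⟩
  simp only [mem_ofPred_eq] at hx2 ⊢
  tauto

theorem aux_lebesgue {n : ℕ} {D : Set (Eucl n)} (hD : IsOpen D) {h : Eucl n → ℝ≥0∞}
    (hm : AEMeasurable h (volume.restrict D))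
    (hfin : ∀ K ⊆ D, IsCompact K → ∫⁻ x in K, h x < ⊤) :
    ∀ᵐ x ∂(volume.restrict D), Tendsto (fun r => (∫⁻ y in closedBall x r, h y) /
      volume (closedBall x r)) (𝓝[>] 0) (𝓝 (h x)) := by
  refine aux_ae_local hD fun c hc => ?_
  obtain ⟨r, hr, hrD⟩ := Metric.nhds_basis_closedBall.mem_iff.1 (hD.mem_nhds hc)
  refine ⟨r, hr, ?_⟩
  set g : Eucl n → ℝ≥0∞ := (closedBall c r).indicator h with hg
  have hgm : AEMeasurable g volume := by
    rw [hg, aemeasurable_indicator_iff measurableSet_closedBall]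
    exact hm.mono_measure (Measure.restrict_mono hrD le_rfl)
  have hgf : ∫⁻ y, g y ≠ ⊤ := by
    rw [hg, lintegral_indicator measurableSet_closedBall]
    exact (hfin _ hrD (isCompact_closedBall _ _)).ne
  filter_upwards [(Besicovitch.vitaliFamily (volume : Measure (Eucl n))).ae_tendsto_lintegral_div hgm hgf]
    with x hx hxb
  have h1 := hx.comp (Besicovitch.tendsto_filterAt volume x)
  rw [hg, indicator_of_mem (ball_subset_closedBall hxb)] at h1
  refine h1.congr' ?_
  obtain ⟨e, he, heb⟩ := Metric.isOpen_iff.1 isOpen_ball x hxb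
  filter_upwards [Ioo_mem_nhdsGT he] with t ht
  simp only [Function.comp]
  congr 1
  refine setLIntegral_congr_fun measurableSet_closedBall fun y hy => ?_
  have : y ∈ closedBall c r := ball_subset_closedBall (heb (closedBall_subset_ball ht.2 hy))
  exact indicator_of_mem this _

theorem aux_density_diff {n : ℕ} {f : Eucl n → Eucl n} {s : Set (Eucl n)} {x : Eucl n} {k : ℝ}
    {r0 : ℝ} (hr0 : 0 < r0) (hk : 0 ≤ k)
    (hs : ∀ z ∈ s, ∀ y, dist y z < r0 → ‖f y - f z‖ ≤ k * ‖y - z‖)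
    (hdiff : DifferentiableWithinAt ℝ f s x)
    (hdens : Tendsto (fun r => volume (s ∩ closedBall x r) / volume (closedBall x r)) (𝓝[>] 0) (𝓝 1)) :
    DifferentiableAt ℝ f x := by
  obtain ⟨L, hL⟩ := hdiff
  refine ⟨L, ?_⟩
  rw [hasFDerivAt_iff_isLittleO, Asymptotics.isLittleO_iff]
  intro c hc
  set ε : ℝ := min 1 (c / (k + ‖L‖ + 2)) with hε
  have hden : 0 < k + ‖L‖ + 2 := by positivity
  have hε0 : 0 < ε := lt_min one_pos (by positivity)
  have hε1 : ε ≤ 1 := min_le_left _ _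
  have hεc : ε * (k + ‖L‖ + 2) ≤ c := by
    rw [← le_div_iff₀ hden]; exact min_le_right _ _
  set δ : ℝ := (ε / (1 + ε)) ^ n with hδ
  have hδ0 : 0 < δ := by positivity
  have hδ1 : δ ≤ 1 := pow_le_one₀ (by positivity) (by rw [div_le_one (by positivity)]; linarith)
  have h1 : ∀ᶠ r in 𝓝[>] (0:ℝ), ENNReal.ofReal (1 - δ) < volume (s ∩ closedBall x r) / volume (closedBall x r) := by
    refine hdens.eventually (lt_mem_nhds ?_)
    rw [ENNReal.ofReal_lt_one]; linarith
  obtain ⟨r1, hr1, h1⟩ := mem_nhdsGT_iff_exists_Ioo_subset.1 h1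
  rw [mem_Ioi] at hr1
  rw [HasFDerivWithinAt, hasFDerivAtFilter_iff_isLittleO, Asymptotics.isLittleO_iff] at hL
  have h2 := hL hε0
  simp only [nhdsWithin, prod_pure, eventually_map] at h2
  rw [eventually_inf_principal, Metric.eventually_nhds_iff] at h2
  obtain ⟨r2, hr2, h2⟩ := h2
  rw [Metric.eventually_nhds_iff]
  refine ⟨min r0 (min (r1/2) (r2/2)), by positivity, ?_⟩
  intro y hy
  by_cases hyx : y = x
  · subst hyx; simp
  rw [lt_min_iff, lt_min_iff] at hy
  obtain ⟨hy0, hy1, hy2⟩ := hy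
  set ρ : ℝ := ‖y - x‖ with hρ
  rw [dist_eq_norm] at hy0 hy1 hy2
  have hρ0 : 0 < ρ := norm_pos_iff.2 (sub_ne_zero.2 hyx)
  have hz : ∃ z ∈ s, ‖z - y‖ ≤ ε * ρ := by
    by_contra hcon
    push Not at hcon
    have h3 : ENNReal.ofReal (1 - δ) < _ := h1 (show (1 + ε) * ρ ∈ Ioo 0 r1 from ⟨by positivity, by nlinarith⟩)
    set B := closedBall x ((1 + ε) * ρ) with hB
    have hB0 : volume B ≠ 0 := (measure_closedBall_pos _ _ (by positivity)).ne'
    have hBt : volume B ≠ ⊤ := measure_closedBall_lt_top.ne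
    rw [ENNReal.lt_div_iff_mul_lt (Or.inl hB0) (Or.inl hBt)] at h3
    have h4 : volume (closedBall y (ε * ρ)) = ENNReal.ofReal δ * volume B := by
      rw [hB, Measure.addHaar_closedBall _ _ (by positivity), Measure.addHaar_closedBall _ _ (by positivity),
        ← mul_assoc, ← ENNReal.ofReal_mul hδ0.le, finrank_euclideanSpace_fin, hδ, ← mul_pow]
      have : ε / (1 + ε) * ((1 + ε) * ρ) = ε * ρ := by field_simp
      rw [this]
    have h5 : volume (s ∩ B) + volume (closedBall y (ε * ρ)) ≤ volume B := by
      rw [← measure_union _ measurableSet_closedBall]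
      · refine measure_mono (union_subset inter_subset_right ?_)
        intro z hz
        rw [hB, mem_closedBall, dist_eq_norm] at *
        calc ‖z - x‖ = ‖(z - y) + (y - x)‖ := by congr 1; abel
          _ ≤ ‖z - y‖ + ‖y - x‖ := norm_add_le _ _
          _ ≤ _ := by rw [← hρ]; linarith
      · rw [Set.disjoint_left]
        rintro z ⟨hz, -⟩ hz2
        rw [mem_closedBall, dist_eq_norm] at hz2
        exact absurd hz2 (not_le.2 (hcon z hz))
    have h6 : volume B < volume (s ∩ B) + volume (closedBall y (ε * ρ)) := by
      calc volume B = ENNReal.ofReal (1 - δ) * volume B + ENNReal.ofReal δ * volume B := by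
            rw [← add_mul, ← ENNReal.ofReal_add (by linarith) hδ0.le]; simp
        _ < _ := by
            rw [h4]
            exact ENNReal.add_lt_add_right (ENNReal.mul_ne_top ENNReal.ofReal_ne_top hBt) h3
    exact absurd h5 (not_le.2 h6)
  obtain ⟨z, hzs, hzy⟩ := hz
  have hzx : ‖z - x‖ ≤ (1 + ε) * ρ := by
    calc ‖z - x‖ = ‖(z - y) + (y - x)‖ := by congr 1; abel
      _ ≤ ‖z - y‖ + ‖y - x‖ := norm_add_le _ _
      _ ≤ _ := by rw [← hρ]; linarith
  have e1 : ‖f y - f z‖ ≤ k * (ε * ρ) := by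
    refine (hs z hzs y ?_).trans ?_
    · rw [dist_comm, dist_eq_norm]; nlinarith
    · gcongr; rw [norm_sub_rev]; exact hzy
  have e2 : ‖f z - f x - L (z - x)‖ ≤ ε * ((1 + ε) * ρ) := by
    refine (h2 (y := z) ?_ hzs).trans ?_
    · rw [dist_eq_norm]; nlinarith
    · gcongr
  have e3 : ‖L (z - y)‖ ≤ ‖L‖ * (ε * ρ) := L.le_of_opNorm_le_of_le le_rfl hzy
  calc ‖f y - f x - L (y - x)‖ = ‖(f y - f z) + (f z - f x - L (z - x)) + L (z - y)‖ := by
        congr 1; simp only [map_sub]; abel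
    _ ≤ ‖f y - f z‖ + ‖f z - f x - L (z - x)‖ + ‖L (z - y)‖ := norm_add₃_le
    _ ≤ k * (ε * ρ) + ε * ((1 + ε) * ρ) + ‖L‖ * (ε * ρ) := by gcongr
    _ ≤ ε * (k + ‖L‖ + 2) * ρ := by nlinarith [mul_pos hε0 hρ0]
    _ ≤ c * ρ := by gcongr

theorem aux_stepanov {n : ℕ} {D : Set (Eucl n)} {f : Eucl n → Eucl n}
    (h : ∀ᵐ x ∂(volume.restrict D), ∃ A r : ℝ, 0 < r ∧ ∀ y, dist y x < r → ‖f y - f x‖ ≤ A * ‖y - x‖) :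
    ∀ᵐ x ∂(volume.restrict D), DifferentiableAt ℝ f x := by
  set E : ℕ → Set (Eucl n) := fun k => {x | ∀ y, dist y x < 1 / ((k:ℝ) + 1) → ‖f y - f x‖ ≤ k * ‖y - x‖} with hE
  have key : ∀ k, ∀ᵐ x ∂(volume : Measure (Eucl n)), x ∈ E k → DifferentiableAt ℝ f x := by
    intro k
    have hloc : ∀ᵐ x ∂((volume : Measure (Eucl n)).restrict univ), (x ∈ E k → DifferentiableAt ℝ f x) := by
      refine aux_ae_local isOpen_univ fun c _ => ?_
      have hr0 : (0:ℝ) < 1 / ((k:ℝ) + 1) := by positivity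
      refine ⟨1 / ((k:ℝ) + 1) / 2, by positivity, ?_⟩
      set s := E k ∩ ball c (1 / ((k:ℝ) + 1) / 2) with hs
      have hlip : LipschitzOnWith (k : ℝ≥0) f s := by
        refine LipschitzOnWith.of_dist_le_mul fun x hx y hy => ?_
        rw [dist_eq_norm, dist_eq_norm]
        refine hy.1 x ?_
        have h1 := hx.2; have h2 := hy.2
        rw [mem_ball] at h1 h2
        linarith [dist_triangle_right x y c]
      filter_upwards [hlip.ae_differentiableWithinAt_of_mem (μ := volume),
        ae_imp_of_ae_restrict (Besicovitch.ae_tendsto_measure_inter_div volume s)] with x h1 h2 hxb hxE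
      have hxs : x ∈ s := ⟨hxE, hxb⟩
      exact aux_density_diff hr0 (Nat.cast_nonneg k) (fun z hz y hy => hz.1 y hy) (h1 hxs) (h2 hxs)
    rwa [Measure.restrict_univ] at hloc
  filter_upwards [h, ae_restrict_of_ae (ae_all_iff.2 key)] with x ⟨A, r, hr, hx⟩ hk
  obtain ⟨k1, hk1⟩ := exists_nat_ge A
  obtain ⟨k2, hk2⟩ := exists_nat_one_div_lt hr
  refine hk (max k1 k2) fun y hy => ?_
  refine (hx y (hy.trans (lt_of_le_of_lt ?_ hk2))).trans ?_
  · apply one_div_le_one_div_of_le (by positivity)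
    have : (k2:ℝ) ≤ (max k1 k2 : ℕ) := by exact_mod_cast le_max_right _ _
    linarith
  · gcongr
    refine hk1.trans ?_
    exact_mod_cast le_max_left _ _


theorem aux_frob {n : ℕ} (A : Eucl n →L[ℝ] Eucl n) : ‖A‖ ≤ frobNorm A := by
  refine A.opNorm_le_bound (Real.sqrt_nonneg _) fun v => ?_
  have hv : v = ∑ j, v j • EuclideanSpace.single j (1:ℝ) := by
    ext i
    simp [Finset.sum_apply, Pi.single_apply]
  have hAv : ∀ i, (A v) i = ∑ j, A (EuclideanSpace.single j 1) i * v j := by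
    intro i
    conv_lhs => rw [hv]
    simp [mul_comm]
  rw [EuclideanSpace.norm_eq, EuclideanSpace.norm_eq, frobNorm, ← Real.sqrt_mul (by positivity)]
  apply Real.sqrt_le_sqrt
  rw [Finset.sum_mul]
  gcongr with i
  rw [hAv i, Real.norm_eq_abs, sq_abs]
  simp only [Real.norm_eq_abs, sq_abs]
  exact Finset.sum_mul_sq_le_sq_mul_sq _ _ _

theorem aux_scale {n : ℕ} (C I : ℝ≥0∞) (α : ℝ) {s M : ℝ} (hs : 0 < s) (hM : 0 < M) (x : Eucl n) :
    C * ENNReal.ofReal (s ^ (α - n)) * I = ENNReal.ofReal (s ^ α) *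
      ((C * ENNReal.ofReal (M ^ n) * volume (ball (0 : Eucl n) 1)) * (I / volume (closedBall x (M * s)))) := by
  have hMs : 0 < M * s := by positivity
  have hB0 : volume (closedBall x (M * s)) ≠ 0 := (measure_closedBall_pos _ _ hMs).ne'
  have hBt : volume (closedBall x (M * s)) ≠ ⊤ := measure_closedBall_lt_top.ne
  have h1 : ENNReal.ofReal (s ^ α) * ENNReal.ofReal (M ^ n) * volume (ball (0 : Eucl n) 1) =
      ENNReal.ofReal (s ^ (α - n)) * volume (closedBall x (M * s)) := by
    rw [Measure.addHaar_closedBall _ _ hMs.le, ← mul_assoc, ← ENNReal.ofReal_mul (by positivity),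
      ← ENNReal.ofReal_mul (by positivity), finrank_euclideanSpace_fin, Real.rpow_sub hs, Real.rpow_natCast,
      mul_pow]
    congr 2
    field_simp
  calc C * ENNReal.ofReal (s ^ (α - n)) * I = C * ENNReal.ofReal (s ^ (α - n)) *
        (volume (closedBall x (M * s)) * (I / volume (closedBall x (M * s)))) := by
        rw [ENNReal.mul_div_cancel hB0 hBt]
    _ = C * (ENNReal.ofReal (s ^ (α - n)) * volume (closedBall x (M * s))) * (I / volume (closedBall x (M * s))) := by ring
    _ = _ := by rw [← h1]; ring

theorem aux_ofReal_rpow_root {α : ℝ} (hα : 0 < α) {s : ℝ} (hs : 0 ≤ s) (X : ℝ≥0∞) :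
    (ENNReal.ofReal (s ^ α) * X) ^ (1/α) = ENNReal.ofReal s * X ^ (1/α) := by
  rw [ENNReal.mul_rpow_of_nonneg _ _ (by positivity), ← ENNReal.ofReal_rpow_of_nonneg hs hα.le,
    ← ENNReal.rpow_mul, mul_one_div_cancel hα.ne', ENNReal.rpow_one]

theorem aux_tendsto_scale {M : ℝ} (hM : 0 < M) {F : ℝ → ℝ≥0∞} {l : ℝ≥0∞} (h : Tendsto F (𝓝[>] 0) (𝓝 l)) :
    Tendsto (fun s => F (M * s)) (𝓝[>] 0) (𝓝 l) := by
  refine h.comp (tendsto_nhdsWithin_iff.2 ⟨?_, ?_⟩)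
  · have : Continuous fun s : ℝ => M * s := by fun_prop
    have h0 := this.tendsto 0
    rw [mul_zero] at h0
    exact h0.mono_left nhdsWithin_le_nhds
  · filter_upwards [self_mem_nhdsWithin] with s hs
    exact mul_pos hM hs

theorem aux_ptLip (d : ℕ) (hd : 2 ≤ d) (α : ℝ) (hα : (d:ℝ) < α) (D D' : Set (Eucl (d+1)))
    (f : Eucl (d+1) → Eucl (d+1)) (Df : Eucl (d+1) → Eucl (d+1) →L[ℝ] Eucl (d+1)) (hD : IsOpen D)
    (hf : IsHomeoOn f D D') (hw : IsWeakDerivOn D f Df)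
    (hI : ∀ K ⊆ D, IsCompact K → ∫⁻ x in K, ‖Df x‖ₑ ^ α < ⊤) :
    ∀ᵐ x ∂(volume.restrict D), ∃ A r : ℝ, 0 < r ∧ ∀ y, dist y x < r → ‖f y - f x‖ ≤ A * ‖y - x‖ := by
  obtain ⟨C, hC, hosc⟩ := aux_osc d hd α hα
  have hα0 : 0 < α := lt_of_le_of_lt (by positivity) hα
  have hm : AEMeasurable (fun x => ‖Df x‖ₑ ^ α) (volume.restrict D) :=
    (hw.2.1.aestronglyMeasurable).enorm.pow_const _
  set M : ℝ := 2 * (d+1 : ℕ) + 1 with hM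
  have hM0 : 0 < M := by positivity
  filter_upwards [aux_lebesgue hD hm hI, ae_restrict_mem hD.measurableSet] with x hx hxD
  set C' : ℝ≥0∞ := C * ENNReal.ofReal (M ^ (d+1)) * volume (ball (0 : Eucl (d+1)) 1) with hC'
  have hC't : C' ≠ ⊤ := ENNReal.mul_ne_top (ENNReal.mul_ne_top hC ENNReal.ofReal_ne_top) measure_ball_lt_top.ne
  have h1 := aux_tendsto_scale hM0 hx
  have hfinx : ‖Df x‖ₑ ^ α < ‖Df x‖ₑ ^ α + 1 := ENNReal.lt_add_right (ENNReal.rpow_ne_top_of_nonneg hα0.le enorm_ne_top) (by simp)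
  have h2 := h1.eventually (gt_mem_nhds hfinx)
  obtain ⟨r1, hr1, h2⟩ := mem_nhdsGT_iff_exists_Ioo_subset.1 h2
  rw [mem_Ioi] at hr1
  obtain ⟨e, he, heD⟩ := Metric.nhds_basis_closedBall.mem_iff.1 (hD.mem_nhds hxD)
  set W : ℝ≥0∞ := (C' * (‖Df x‖ₑ ^ α + 1)) ^ (1/α) with hW
  have hWt : W ≠ ⊤ := ENNReal.rpow_ne_top_of_nonneg (by positivity) (ENNReal.mul_ne_top hC't (by
    simp [hα0.le]))
  refine ⟨W.toReal, min r1 (e / M), by positivity, fun y hy => ?_⟩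
  by_cases hyx : y = x
  · subst hyx; simp
  set s := ‖y - x‖ with hs
  have hs0 : 0 < s := norm_pos_iff.2 (sub_ne_zero.2 hyx)
  rw [dist_eq_norm, ← hs, lt_min_iff, lt_div_iff₀ hM0] at hy
  have h3 := hosc D D' f Df hf hw x s hs0 ((closedBall_subset_closedBall (by linarith [hy.2])).trans heD)
    y (by rw [mem_closedBall, dist_eq_norm]) x (mem_closedBall_self hs0.le)
  have hcast : ((d:ℝ)+1) = ((d+1 : ℕ) : ℝ) := by push_cast; ring
  rw [hcast, aux_scale C _ α hs0 hM0 x] at h3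
  have h4 : ‖f y - f x‖ₑ ≤ ENNReal.ofReal s * W := by
    rw [hW, ← aux_ofReal_rpow_root hα0 hs0.le, one_div, ENNReal.le_rpow_inv_iff hα0]
    refine h3.trans ?_
    have := h2 (show s ∈ Ioo 0 r1 from ⟨hs0, hy.1⟩)
    gcongr
    exact (le_of_lt this)
  have h5 := ENNReal.toReal_mono (ENNReal.mul_ne_top ENNReal.ofReal_ne_top hWt) h4
  rw [toReal_enorm, ENNReal.toReal_mul, ENNReal.toReal_ofReal hs0.le] at h5
  linarith

theorem aux_diff_ident (d : ℕ) (hd : 2 ≤ d) (α : ℝ) (hα : (d:ℝ) < α) (D D' : Set (Eucl (d+1)))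
    (f : Eucl (d+1) → Eucl (d+1)) (Df : Eucl (d+1) → Eucl (d+1) →L[ℝ] Eucl (d+1)) (hD : IsOpen D)
    (hf : IsHomeoOn f D D') (hw : IsWeakDerivOn D f Df)
    (hI : ∀ K ⊆ D, IsCompact K → ∫⁻ x in K, ‖Df x‖ₑ ^ α < ⊤) :
    ∀ᵐ x ∂(volume.restrict D), HasFDerivAt f (Df x) x := by
  have hdiff := aux_stepanov (aux_ptLip d hd α hα D D' f Df hD hf hw hI)
  obtain ⟨C, hC, hsl⟩ := aux_slice d (by omega) α hα
  have hd2 : (2:ℝ) ≤ d := by exact_mod_cast hd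
  have hα0 : 0 < α := by linarith
  have hα1 : 1 ≤ α := by linarith
  have hm : ∀ L, AEMeasurable (fun x => ‖Df x - L‖ₑ ^ α) (volume.restrict D) := fun L =>
    ((hw.2.1.aestronglyMeasurable).sub aestronglyMeasurable_const).enorm.pow_const _
  have hIL : ∀ L : Eucl (d+1) →L[ℝ] Eucl (d+1), ∀ K ⊆ D, IsCompact K → ∫⁻ x in K, ‖Df x - L‖ₑ ^ α < ⊤ := by
    intro L K hK hKc
    calc ∫⁻ x in K, ‖Df x - L‖ₑ ^ α ≤ ∫⁻ x in K, (2 ^ (α - 1) * (‖Df x‖ₑ ^ α + ‖L‖ₑ ^ α)) := by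
          refine lintegral_mono fun x => ?_
          refine le_trans ?_ (ENNReal.rpow_add_le_mul_rpow_add_rpow _ _ hα1)
          gcongr
          exact enorm_sub_le
      _ = 2 ^ (α - 1) * ((∫⁻ x in K, ‖Df x‖ₑ ^ α) + ∫⁻ x in K, ‖L‖ₑ ^ α) := by
          rw [lintegral_const_mul' _ _ (ENNReal.rpow_ne_top_of_nonneg (by linarith) (by simp)),
            lintegral_add_right _ measurable_const]
      _ < ⊤ := by
          refine ENNReal.mul_lt_top (ENNReal.rpow_lt_top_of_nonneg (by linarith) (by simp)) (ENNReal.add_lt_top.2 ⟨hI K hK hKc, ?_⟩)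
          rw [setLIntegral_const]
          exact ENNReal.mul_lt_top (ENNReal.rpow_lt_top_of_nonneg hα0.le enorm_ne_top) hKc.measure_lt_top
  set M : ℝ := 2 * (d+1 : ℕ) + 1 with hM
  have hM0 : 0 < M := by positivity
  set Ls := TopologicalSpace.denseSeq (Eucl (d+1) →L[ℝ] Eucl (d+1)) with hLs
  set C' : ℝ≥0∞ := C * ENNReal.ofReal (M ^ (d+1)) * volume (ball (0 : Eucl (d+1)) 1) with hC'
  have hC't : C' ≠ ⊤ := ENNReal.mul_ne_top (ENNReal.mul_ne_top hC ENNReal.ofReal_ne_top) measure_ball_lt_top.ne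
  have hall : ∀ᵐ x ∂(volume.restrict D), ∀ k, Tendsto (fun r => (∫⁻ y in closedBall x r, ‖Df y - Ls k‖ₑ ^ α) /
      volume (closedBall x r)) (𝓝[>] 0) (𝓝 (‖Df x - Ls k‖ₑ ^ α)) :=
    ae_all_iff.2 fun k => aux_lebesgue hD (hm _) (hIL _)
  filter_upwards [hdiff, hall, ae_restrict_mem hD.measurableSet] with x hx hL hxD
  set A := fderiv ℝ f x with hA
  have hAx : HasFDerivAt f A x := hx.hasFDerivAt
  obtain ⟨e, he, heD⟩ := Metric.nhds_basis_closedBall.mem_iff.1 (hD.mem_nhds hxD)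
  have hcast : ((d:ℝ)+1) = ((d+1 : ℕ) : ℝ) := by push_cast; ring
  have hstep : ∀ i k, ‖(A - Ls k) (EuclideanSpace.single i 1)‖ₑ ≤ (C' * ‖Df x - Ls k‖ₑ ^ α) ^ (1/α) := by
    intro i k
    set L := Ls k with hLk
    obtain ⟨j, hji⟩ : ∃ j : Fin (d+1), j ≠ i := by
      have : Nontrivial (Fin (d+1)) := Fin.nontrivial_iff_two_le.2 (by omega)
      exact exists_ne i
    have hη : ∀ η : ℝ, 0 < η → ‖(A - L) (EuclideanSpace.single i 1)‖ₑ ≤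
        (C' * ‖Df x - L‖ₑ ^ α) ^ (1/α) + ENNReal.ofReal (4 * (d+1 : ℕ) * η) := by
      intro η hη
      rw [hasFDerivAt_iff_isLittleO, Asymptotics.isLittleO_iff] at hAx
      obtain ⟨r1, hr1, h1⟩ := Metric.eventually_nhds_iff.1 (hAx hη)
      have hlim : Tendsto (fun s => (C' * ((∫⁻ y in closedBall x (M * s), ‖Df y - L‖ₑ ^ α) /
          volume (closedBall x (M * s)))) ^ (1/α) + ENNReal.ofReal (4 * (d+1 : ℕ) * η)) (𝓝[>] 0)
          (𝓝 ((C' * ‖Df x - L‖ₑ ^ α) ^ (1/α) + ENNReal.ofReal (4 * (d+1 : ℕ) * η))) := by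
        refine Tendsto.add ?_ tendsto_const_nhds
        refine ((ENNReal.continuous_rpow_const (y := 1/α)).tendsto _).comp ?_
        exact ENNReal.Tendsto.const_mul (aux_tendsto_scale hM0 (hL k)) (Or.inr hC't)
      refine ge_of_tendsto hlim ?_
      filter_upwards [Ioo_mem_nhdsGT (show 0 < min (e / M) (r1 / M) by positivity)] with s hs
      obtain ⟨hs0, hs1⟩ := hs
      rw [lt_min_iff, lt_div_iff₀ hM0, lt_div_iff₀ hM0] at hs1
      obtain ⟨c, hc, hcz⟩ := hsl D f Df hf.continuousOn hw x s hs0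
        ((closedBall_subset_closedBall (by linarith [hs1.1])).trans heD) L j 0 (by norm_num) (by norm_num)
      set z' : Fin (d+1) → ℝ := Pi.single j c with hz'
      set z : Fin (d+1) → ℝ := z' + Pi.single i 1 with hz
      have hc2 : |c| ≤ 1 := abs_le.2 ⟨by linarith [hc.1], by linarith [hc.2]⟩
      have hz'm : ‖z'‖ ≤ 1 := by
        rw [hz', Pi.norm_single]; exact hc2
      have hzm : ‖z‖ ≤ 2 := by
        have h1 : ‖(Pi.single i 1 : Fin (d+1) → ℝ)‖ = 1 := by rw [Pi.norm_single]; simp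
        have := norm_add_le z' (Pi.single i 1 : Fin (d+1) → ℝ)
        linarith
      have hzb : z ∈ closedBall (0 : Fin (d+1) → ℝ) 2 := by simpa using hzm
      have hzb' : z' ∈ closedBall (0 : Fin (d+1) → ℝ) 2 := by
        rw [mem_closedBall, dist_zero_right]; linarith
      have h2 := hcz z hzb z' hzb' (by simp [hz, hz', hji]) (by simp [hz'])
      rw [hcast, aux_scale C _ α hs0 hM0 x] at h2
      have h3 : ‖(f (auxP x s z) - L (auxP x s z)) - (f (auxP x s z') - L (auxP x s z'))‖ₑ ≤
          ENNReal.ofReal s * (C' * ((∫⁻ y in closedBall x (M * s), ‖Df y - L‖ₑ ^ α) /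
          volume (closedBall x (M * s)))) ^ (1/α) := by
        rw [← aux_ofReal_rpow_root hα0 hs0.le, one_div, ENNReal.le_rpow_inv_iff hα0]
        exact h2
      have hsmall : ∀ w ∈ closedBall (0 : Fin (d+1) → ℝ) 2,
          ‖f (auxP x s w) - f x - A (auxP x s w - x)‖ ≤ η * (2 * (d+1 : ℕ) * s) := by
        intro w hw
        have h4 := auxP_mem x hs0 hw
        rw [mem_closedBall] at h4
        refine (h1 ?_).trans ?_
        · have : 2 * (d+1 : ℕ) * s < M * s := by rw [hM]; nlinarith
          linarith [hs1.2]
        · rw [← dist_eq_norm]; gcongr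
      have hPd : auxP x s z - auxP x s z' = s • EuclideanSpace.single i 1 := by
        ext l
        simp [auxP, hz]
      have hid : s • (A - L) (EuclideanSpace.single i 1) =
          ((f (auxP x s z) - L (auxP x s z)) - (f (auxP x s z') - L (auxP x s z'))) +
          ((f (auxP x s z') - f x - A (auxP x s z' - x)) - (f (auxP x s z) - f x - A (auxP x s z - x))) := by
        rw [← map_smul, ← hPd]
        simp only [_root_.sub_apply, map_sub]
        abel
      have h5 : ‖(f (auxP x s z') - f x - A (auxP x s z' - x)) - (f (auxP x s z) - f x - A (auxP x s z - x))‖ₑ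
          ≤ ENNReal.ofReal s * ENNReal.ofReal (4 * (d+1 : ℕ) * η) := by
        rw [← ENNReal.ofReal_mul hs0.le, ← ofReal_norm]
        apply ENNReal.ofReal_le_ofReal
        refine (norm_sub_le _ _).trans ?_
        linarith [hsmall z hzb, hsmall z' hzb']
      have h6 : ENNReal.ofReal s * ‖(A - L) (EuclideanSpace.single i 1)‖ₑ ≤ ENNReal.ofReal s *
          ((C' * ((∫⁻ y in closedBall x (M * s), ‖Df y - L‖ₑ ^ α) /
          volume (closedBall x (M * s)))) ^ (1/α) + ENNReal.ofReal (4 * (d+1 : ℕ) * η)) := by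
        rw [mul_add, ← Real.enorm_eq_ofReal hs0.le, ← enorm_smul, hid, Real.enorm_eq_ofReal hs0.le]
        exact (enorm_add_le _ _).trans (add_le_add h3 h5)
      exact (ENNReal.mul_le_mul_iff_right (by simpa using hs0) ENNReal.ofReal_ne_top).1 h6
    have hlim : Tendsto (fun η : ℝ => (C' * ‖Df x - L‖ₑ ^ α) ^ (1/α) + ENNReal.ofReal (4 * (d+1 : ℕ) * η)) (𝓝[>] 0)
        (𝓝 ((C' * ‖Df x - L‖ₑ ^ α) ^ (1/α))) := by
      have : Continuous fun η : ℝ => ENNReal.ofReal (4 * (d+1 : ℕ) * η) := ENNReal.continuous_ofReal.comp (by fun_prop)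
      have h0 := (this.tendsto 0).mono_left (nhdsWithin_le_nhds (s := Ioi 0))
      simp only [mul_zero, ENNReal.ofReal_zero] at h0
      simpa using tendsto_const_nhds.add h0
    refine ge_of_tendsto hlim ?_
    filter_upwards [self_mem_nhdsWithin] with η h using hη η h
  have hzero : ∀ i, (A - Df x) (EuclideanSpace.single i 1) = 0 := by
    intro i
    obtain ⟨u, hu⟩ : ∃ u : ℕ → ℕ, Tendsto (fun m => Ls (u m)) atTop (𝓝 (Df x)) := by
      have hcl : Df x ∈ closure (range Ls) := by
        rw [(TopologicalSpace.denseRange_denseSeq _).closure_range]; trivial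
      obtain ⟨w, hw, hwt⟩ := mem_closure_iff_seq_limit.1 hcl
      choose u hu using hw
      exact ⟨u, by simpa [hu] using hwt⟩
    have hl1 : Tendsto (fun m => ‖(A - Ls (u m)) (EuclideanSpace.single i 1)‖ₑ) atTop
        (𝓝 ‖(A - Df x) (EuclideanSpace.single i 1)‖ₑ) := by
      have : Continuous fun L : Eucl (d+1) →L[ℝ] Eucl (d+1) => ‖(A - L) (EuclideanSpace.single i 1)‖ₑ := by fun_prop
      exact (this.tendsto _).comp hu
    have hl2 : Tendsto (fun m => (C' * ‖Df x - Ls (u m)‖ₑ ^ α) ^ (1/α)) atTop (𝓝 0) := by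
      have h1 : Tendsto (fun m => ‖Df x - Ls (u m)‖ₑ) atTop (𝓝 0) := by
        have := (tendsto_const_nhds (x := Df x)).sub hu |>.enorm
        rw [sub_self] at this
        have h00 : ‖(0 : Eucl (d+1) →L[ℝ] Eucl (d+1))‖ₑ = 0 := by rw [← ofReal_norm, norm_zero, ENNReal.ofReal_zero]
        rwa [h00] at this
      have h2 := ((ENNReal.continuous_rpow_const (y := α)).tendsto _).comp h1
      have h3 := ENNReal.Tendsto.const_mul (a := C') h2 (Or.inr hC't)
      have h4 := ((ENNReal.continuous_rpow_const (y := 1/α)).tendsto _).comp h3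
      simpa [Function.comp_def, ENNReal.zero_rpow_of_pos hα0, hα0] using h4
    have := le_of_tendsto_of_tendsto' hl1 hl2 (fun m => hstep i (u m))
    simpa using this
  have hAD : A = Df x := by
    rw [← sub_eq_zero]
    ext1 v
    have hv : v = ∑ j, v j • EuclideanSpace.single j (1:ℝ) := by
      ext i
      simp [Finset.sum_apply, Pi.single_apply]
    rw [hv, map_sum]
    simp [hzero]
  rw [← hAD]
  exact hAx


theorem aux_eil {n : ℕ} (d : ℝ) (hd : 0 < d) (g : Eucl n → Eucl n) (x₀ : Eucl n) (A : Set (Eucl n))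
    (ν : Measure (Eucl n)) [SFinite ν] [ν.OuterRegular] (C : ℝ≥0∞) (hC : C ≠ ⊤)
    (H : ∀ x ∈ A, ∀ δ : ℝ, 0 < δ → ∃ s ∈ Ioo 0 δ, ediam (g '' closedBall x s) ≤ ENNReal.ofReal δ ∧
      ENNReal.ofReal s * ediam (g '' closedBall x s) ^ d ≤ C * ν (closedBall x s)) :
    ∃ F : ℝ → ℝ≥0∞, Measurable F ∧ (∀ r, μH[d] (g '' (A ∩ sphere x₀ r)) ≤ F r) ∧ ∫⁻ r, F r ≤ 2 * C * ν A := by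
  have hε : ∀ k : ℕ, (0:ℝ) < 1 / (k+1) := fun k => by positivity
  have hcov : ∀ k : ℕ, ∃ (t : Set (Eucl n)) (r : Eucl n → ℝ), t.Countable ∧ t ⊆ A ∧
      (∀ x ∈ t, r x ∈ {s : ℝ | 0 < s ∧ ediam (g '' closedBall x s) ≤ ENNReal.ofReal (1/(k+1)) ∧
      ENNReal.ofReal s * ediam (g '' closedBall x s) ^ d ≤ C * ν (closedBall x s)}) ∧
      A ⊆ ⋃ x ∈ t, closedBall x (r x) ∧ ∑' x : t, ν (closedBall x (r x)) ≤ ν A + ENNReal.ofReal (1/(k+1)) := by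
    intro k
    refine Besicovitch.exists_closedBall_covering_tsum_measure_le ν (by simpa using hε k) _ A ?_
    intro x hx δ hδ
    obtain ⟨s, hs, h1, h2⟩ := H x hx (min δ (1/(k+1))) (lt_min hδ (hε k))
    exact ⟨s, ⟨hs.1, h1.trans (ENNReal.ofReal_le_ofReal (min_le_right _ _)), h2⟩, hs.1, hs.2.trans_le (min_le_left _ _)⟩
  choose t s htc htA hs hA hν using hcov
  have hcount : ∀ k, Countable (t k) := fun k => (htc k).to_subtype
  set I : ∀ x : Eucl n, ℝ → Set ℝ := fun x s => Icc (dist x x₀ - s) (dist x x₀ + s) with hI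
  set G : ℕ → ℝ → ℝ≥0∞ := fun k r => ∑' x : t k,
    (I x (s k x)).indicator (fun _ => ediam (g '' closedBall (x:Eucl n) (s k x)) ^ d) r with hG
  have hGm : ∀ k, Measurable (G k) := fun k => by
    refine Measurable.tsum fun x => ?_
    exact measurable_const.indicator measurableSet_Icc
  refine ⟨fun r => liminf (fun k => G k r) atTop, Measurable.liminf hGm, ?_, ?_⟩
  · intro r
    set T : ∀ k, t k → Set (Eucl n) := fun k x => if r ∈ I x (s k x) then g '' closedBall (x:Eucl n) (s k x) else ∅ with hT
    have := Measure.hausdorffMeasure_le_liminf_tsum (β := ℕ) (l := atTop) d (g '' (A ∩ sphere x₀ r))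
      (fun k => ENNReal.ofReal (1/(k+1))) (by
        have := ENNReal.tendsto_ofReal tendsto_one_div_add_atTop_nhds_zero_nat
        simpa using this) T (by
        refine Eventually.of_forall fun k x => ?_
        simp only [hT]
        split_ifs
        · exact (hs k x x.2).2.1
        · simp) (by
        refine Eventually.of_forall fun k => ?_
        rintro _ ⟨y, ⟨hyA, hyr⟩, rfl⟩
        obtain ⟨x, hx, hyx⟩ := mem_iUnion₂.1 (hA k hyA)
        refine mem_iUnion.2 ⟨⟨x, hx⟩, ?_⟩
        simp only [hT]
        rw [if_pos]
        · exact ⟨y, hyx, rfl⟩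
        · rw [mem_closedBall] at hyx
          rw [mem_sphere] at hyr
          have h1 := dist_triangle y x x₀
          have h2 := dist_triangle_left x x₀ y
          simp only [hI, mem_Icc]
          constructor <;> linarith)
    refine this.trans (le_of_eq ?_)
    congr 1
    ext k
    refine tsum_congr fun x => ?_
    simp only [hT, indicator]
    split_ifs
    · rfl
    · simp [hd]
  · refine (lintegral_liminf_le hGm).trans ?_
    have hk : ∀ k, ∫⁻ r, G k r ≤ 2 * C * (ν A + ENNReal.ofReal (1/(k+1))) := by
      intro k
      rw [lintegral_tsum (fun x => (measurable_const.indicator measurableSet_Icc).aemeasurable)]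
      calc _ ≤ ∑' x : t k, 2 * C * ν (closedBall (x : Eucl n) (s k x)) := by
            refine ENNReal.tsum_le_tsum fun x => ?_
            rw [lintegral_indicator_const measurableSet_Icc, Real.volume_Icc]
            have h1 := (hs k x x.2).2.2
            have h0 := (hs k x x.2).1
            have : ENNReal.ofReal (dist (x:Eucl n) x₀ + s k x - (dist (x:Eucl n) x₀ - s k x)) = 2 * ENNReal.ofReal (s k x) := by
              rw [show dist (x:Eucl n) x₀ + s k x - (dist (x:Eucl n) x₀ - s k x) = 2 * s k x by ring,
                ENNReal.ofReal_mul (by norm_num)]; simp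
            rw [this]
            calc _ = 2 * (ENNReal.ofReal (s k x) * ediam (g '' closedBall (x:Eucl n) (s k x)) ^ d) := by ring
              _ ≤ 2 * (C * ν (closedBall (x:Eucl n) (s k x))) := by gcongr
              _ = _ := by ring
        _ = 2 * C * ∑' x : t k, ν (closedBall (x : Eucl n) (s k x)) := ENNReal.tsum_mul_left
        _ ≤ _ := by gcongr; exact hν k
    refine (liminf_le_liminf (Eventually.of_forall hk)).trans (le_of_eq ?_)
    apply Tendsto.liminf_eq
    refine ENNReal.Tendsto.const_mul ?_ (Or.inr (ENNReal.mul_ne_top (by simp) hC))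
    have := ENNReal.tendsto_ofReal tendsto_one_div_add_atTop_nhds_zero_nat
    simpa using tendsto_const_nhds.add this

theorem aux_doubling {n : ℕ} (ν : Measure (Eucl n)) [IsLocallyFiniteMeasure ν] (hν : volume ≤ ν) (hn : 0 < n) (M : ℝ) (hM : 1 < M)
    (x : Eucl n) (δ : ℝ) (hδ : 0 < δ) :
    ∃ s ∈ Ioo 0 δ, ν (closedBall x (M * s)) ≤ ENNReal.ofReal (2 * M ^ n) * ν (closedBall x s) := by
  by_contra hcon
  push Not at hcon
  have hM0 : 0 < M := by linarith
  have hk : ∀ k : ℕ, ENNReal.ofReal (2 * M ^ n) ^ k * ν (closedBall x (δ / (2 * M ^ k))) ≤ ν (closedBall x (δ/2)) := by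
    intro k
    induction k with
    | zero => simp
    | succ k ih =>
      refine le_trans ?_ ih
      have hlt : δ / (2 * M ^ (k+1)) < δ := by
        rw [div_lt_iff₀ (by positivity)]
        have : 1 ≤ M ^ (k+1) := one_le_pow₀ hM.le
        nlinarith
      have := hcon (δ / (2 * M ^ (k+1))) ⟨by positivity, hlt⟩
      have h2 : M * (δ / (2 * M ^ (k+1))) = δ / (2 * M ^ k) := by
        rw [pow_succ]; field_simp
      rw [h2] at this
      rw [pow_succ, mul_assoc]
      gcongr
  have hfin : ν (closedBall x (δ/2)) < ⊤ := (isCompact_closedBall _ _).measure_lt_top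
  set c := ENNReal.ofReal ((δ/2) ^ n) * volume (ball (0 : Eucl n) 1) with hc
  have hc0 : 0 < c := by
    refine ENNReal.mul_pos (by simp; positivity) (measure_ball_pos _ _ one_pos).ne'
  have h2 : ∀ k : ℕ, (2:ℝ≥0∞) ^ k * c ≤ ν (closedBall x (δ/2)) := by
    intro k
    refine le_trans (le_trans (le_of_eq ?_) (mul_le_mul_right (hν (closedBall x (δ / (2 * M ^ k)))) _)) (hk k)
    rw [Measure.addHaar_closedBall _ _ (by positivity), finrank_euclideanSpace_fin, hc, ← mul_assoc, ← mul_assoc]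
    congr 1
    rw [← ENNReal.ofReal_pow (by positivity), ← ENNReal.ofReal_mul (by positivity),
      show (2:ℝ≥0∞) = ENNReal.ofReal 2 by simp, ← ENNReal.ofReal_pow (by positivity), ← ENNReal.ofReal_mul (by positivity)]
    congr 1
    rw [mul_pow, div_pow, div_pow, mul_pow, ← pow_mul, ← pow_mul, mul_comm n k]
    field_simp
  have h3 : Tendsto (fun k : ℕ => (2:ℝ≥0∞) ^ k * c) atTop (𝓝 (⊤ * c)) := by
    refine ENNReal.Tendsto.mul_const (ENNReal.tendsto_pow_atTop_nhds_top_iff.2 (by norm_num)) (Or.inr ?_)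
    exact ENNReal.mul_ne_top ENNReal.ofReal_ne_top measure_ball_lt_top.ne
  have := le_of_tendsto' h3 h2
  rw [ENNReal.top_mul hc0.ne'] at this
  exact absurd (lt_of_le_of_lt this hfin) (lt_irrefl _)


theorem aux_alg (d α : ℝ) (hd : 0 < d) (hα : d < α) (s : ℝ) (hs : 0 < s) (E V C c : ℝ≥0∞) (hc0 : c ≠ 0) (hct : c ≠ ⊤)
    (h1 : E ^ α ≤ C * ENNReal.ofReal (s ^ (α - (d+1))) * V) (h2 : ENNReal.ofReal (s ^ (d+1)) * c ≤ V) :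
    ENNReal.ofReal s * E ^ d ≤ (C ^ (d/α) * (c⁻¹) ^ (1 - d/α)) * V := by
  have hα0 : 0 < α := hd.trans hα
  set θ := d / α with hθ
  have hθ0 : 0 < θ := by positivity
  have hθ1 : θ < 1 := (div_lt_one hα0).2 hα
  have e1 : E ^ d ≤ C ^ θ * ENNReal.ofReal (s ^ (α - (d+1))) ^ θ * V ^ θ := by
    have : E ^ d = (E ^ α) ^ θ := by
      rw [← ENNReal.rpow_mul, hθ, mul_div_cancel₀ _ hα0.ne']
    rw [this, ← ENNReal.mul_rpow_of_nonneg _ _ hθ0.le, ← ENNReal.mul_rpow_of_nonneg _ _ hθ0.le]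
    exact ENNReal.rpow_le_rpow h1 hθ0.le
  have e2 : ENNReal.ofReal s * ENNReal.ofReal (s ^ (α - (d+1))) ^ θ = ENNReal.ofReal (s ^ (d+1)) ^ (1 - θ) := by
    rw [ENNReal.ofReal_rpow_of_pos (by positivity), ENNReal.ofReal_rpow_of_pos (by positivity), ← ENNReal.ofReal_mul hs.le,
      ← Real.rpow_mul hs.le, ← Real.rpow_mul hs.le]
    congr 1
    nth_rewrite 1 [← Real.rpow_one s]
    rw [← Real.rpow_add hs]
    congr 1
    have : α * θ = d := by rw [hθ]; field_simp
    linarith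
  have e3 : ENNReal.ofReal (s ^ (d+1)) ≤ c⁻¹ * V := by
    rw [mul_comm, ← div_eq_mul_inv]
    exact (ENNReal.le_div_iff_mul_le (Or.inl hc0) (Or.inl hct)).2 h2
  calc ENNReal.ofReal s * E ^ d ≤ ENNReal.ofReal s * (C ^ θ * ENNReal.ofReal (s ^ (α - (d+1))) ^ θ * V ^ θ) := by gcongr
    _ = C ^ θ * (ENNReal.ofReal s * ENNReal.ofReal (s ^ (α - (d+1))) ^ θ) * V ^ θ := by ring
    _ ≤ C ^ θ * ((c⁻¹ * V) ^ (1 - θ)) * V ^ θ := by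
        rw [e2]
        gcongr
    _ = C ^ θ * (c⁻¹) ^ (1 - θ) * (V ^ (1 - θ) * V ^ θ) := by
        rw [ENNReal.mul_rpow_of_nonneg _ _ (by linarith)]; ring
    _ = _ := by
        rw [← ENNReal.rpow_add_of_nonneg _ _ (by linarith) hθ0.le, sub_add_cancel, ENNReal.rpow_one]

theorem aux_sphere_fin (d : ℕ) (hd : 1 ≤ d) (x₀ : Eucl (d+1)) : ∀ᵐ r : ℝ, μH[(d:ℝ)] (sphere x₀ r) < ⊤ := by
  have key : ∀ R : ℕ, ∀ᵐ r : ℝ, r ≤ R → μH[(d:ℝ)] (sphere x₀ r) < ⊤ := by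
    intro R
    have hd0 : (0:ℝ) < d := by exact_mod_cast hd
    set c : ℝ≥0∞ := volume (ball (0 : Eucl (d+1)) 1) with hc
    have hc0 : c ≠ 0 := (measure_ball_pos _ _ one_pos).ne'
    have hct : c ≠ ⊤ := measure_ball_lt_top.ne
    obtain ⟨F, hFm, hF, hFi⟩ := aux_eil (d:ℝ) hd0 id x₀ (closedBall x₀ R) volume (2 ^ (d:ℝ) * c⁻¹)
      (ENNReal.mul_ne_top (by simp) (by simpa using hc0)) (by
        intro x hx δ hδ
        have hb : ∀ s : ℝ, 0 < s → ediam (closedBall x s) ≤ 2 * ENNReal.ofReal s := by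
          intro s hs
          rw [← Metric.closedEBall_ofReal hs.le]
          exact Metric.ediam_closedEBall_le
        refine ⟨δ/2, ⟨by positivity, by linarith⟩, ?_, ?_⟩
        · rw [image_id]
          refine (hb _ (by positivity)).trans (le_of_eq ?_)
          rw [show (2:ℝ≥0∞) = ENNReal.ofReal 2 by simp, ← ENNReal.ofReal_mul (by norm_num)]
          congr 1; ring
        · rw [image_id]
          set s := δ/2 with hs
          have hs0 : 0 < s := by positivity
          calc ENNReal.ofReal s * ediam (closedBall x s) ^ (d:ℝ) ≤ ENNReal.ofReal s * (2 * ENNReal.ofReal s) ^ (d:ℝ) := by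
                gcongr; exact hb s hs0
            _ = 2 ^ (d:ℝ) * c⁻¹ * (ENNReal.ofReal s ^ (d+1) * c) := by
                rw [ENNReal.mul_rpow_of_nonneg _ _ hd0.le]
                rw [show 2 ^ (d:ℝ) * c⁻¹ * (ENNReal.ofReal s ^ (d+1) * c) = 2 ^ (d:ℝ) * ENNReal.ofReal s ^ (d+1) * (c⁻¹ * c) by ring,
                  ENNReal.inv_mul_cancel hc0 hct, ENNReal.rpow_natCast, ENNReal.rpow_natCast]
                ring
            _ = _ := by
                rw [Measure.addHaar_closedBall _ _ hs0.le, finrank_euclideanSpace_fin, ENNReal.ofReal_pow hs0.le])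
    have hfin : ∫⁻ r, F r ≠ ⊤ := by
      refine ne_top_of_le_ne_top ?_ hFi
      refine ENNReal.mul_ne_top (ENNReal.mul_ne_top (by simp) (ENNReal.mul_ne_top (by simp) (by simpa using hc0))) measure_closedBall_lt_top.ne
    filter_upwards [ae_lt_top hFm hfin] with r hr hrR
    refine lt_of_le_of_lt ?_ hr
    refine le_trans (le_of_eq ?_) (hF r)
    rw [image_id, inter_eq_right.2]
    exact sphere_subset_closedBall.trans (closedBall_subset_closedBall hrR)
  filter_upwards [ae_all_iff.2 key] with r hr
  obtain ⟨R, hR⟩ := exists_nat_ge r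
  exact hr R hR

theorem aux_lusin (d : ℕ) (hd : 2 ≤ d) (α : ℝ) (hα : (d:ℝ) < α) (D D' : Set (Eucl (d+1)))
    (f : Eucl (d+1) → Eucl (d+1)) (Df : Eucl (d+1) → Eucl (d+1) →L[ℝ] Eucl (d+1)) (hD : IsOpen D)
    (hf : IsHomeoOn f D D') (hw : IsWeakDerivOn D f Df)
    (hI : ∀ K ⊆ D, IsCompact K → ∫⁻ x in K, ‖Df x‖ₑ ^ α < ⊤) (x₀ : Eucl (d+1)) (K : Set (Eucl (d+1)))
    (hK : IsCompact K) (hKD : K ⊆ D) (N : Set (Eucl (d+1))) (hNK : N ⊆ K) (hN : volume N = 0) :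
    ∀ᵐ r : ℝ, μH[(d:ℝ)] (f '' (N ∩ sphere x₀ r)) = 0 := by
  obtain ⟨C, hC, hosc⟩ := aux_osc d hd α hα
  have hd0 : (0:ℝ) < d := by exact_mod_cast (by omega : 0 < d)
  have hα0 : 0 < α := hd0.trans hα
  set M : ℝ := 2 * (d+1 : ℕ) + 1 with hM
  have hM0 : 1 < M := by rw [hM]; push_cast; linarith
  obtain ⟨e, he, heD⟩ := hK.exists_cthickening_subset_open hD hKD
  set W := cthickening e K with hW
  have hWc : IsCompact W := hK.cthickening
  set ν₁ : Measure (Eucl (d+1)) := (volume.restrict W).withDensity (fun x => ‖Df x‖ₑ ^ α) with hν₁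
  have hν₁f : IsFiniteMeasure ν₁ := isFiniteMeasure_withDensity (hI W heD hWc).ne
  set ν := volume + ν₁ with hν
  have hνl : IsLocallyFiniteMeasure ν := by
    refine ⟨fun x => ⟨closedBall x 1, closedBall_mem_nhds x one_pos, ?_⟩⟩
    rw [hν, Measure.add_apply]
    exact ENNReal.add_lt_top.2 ⟨measure_closedBall_lt_top, measure_lt_top _ _⟩
  have hνN : ν N = 0 := by
    rw [hν, Measure.add_apply, hN, zero_add]
    refine (withDensity_absolutelyContinuous _ _) ?_
    exact (Measure.restrict_le_self.absolutelyContinuous) hN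
  have hvol : volume ≤ ν := Measure.le_add_right le_rfl
  set c : ℝ≥0∞ := volume (ball (0 : Eucl (d+1)) 1) with hc
  have hc0 : c ≠ 0 := (measure_ball_pos _ _ one_pos).ne'
  have hct : c ≠ ⊤ := measure_ball_lt_top.ne
  set C1 : ℝ≥0∞ := C * ENNReal.ofReal (2 * M ^ (d+1)) with hC1
  have hC1t : C1 ≠ ⊤ := ENNReal.mul_ne_top hC ENNReal.ofReal_ne_top
  have hθ : (d:ℝ) / α < 1 := (div_lt_one hα0).2 hα
  obtain ⟨F, hFm, hF, hFi⟩ := aux_eil (d:ℝ) hd0 f x₀ N ν (C1 ^ ((d:ℝ)/α) * (c⁻¹) ^ (1 - (d:ℝ)/α))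
    (ENNReal.mul_ne_top (ENNReal.rpow_ne_top_of_nonneg (by positivity) hC1t)
      (ENNReal.rpow_ne_top_of_nonneg (by linarith) (by simpa using hc0))) (by
      intro x hx δ hδ
      have hcont : ContinuousAt f x := hf.continuousOn.continuousAt (hD.mem_nhds (hKD (hNK hx)))
      obtain ⟨δ1, hδ1, hδc⟩ := Metric.continuousAt_iff.1 hcont (δ/2) (by positivity)
      obtain ⟨s, hs, hdb⟩ := aux_doubling ν hvol (by omega) M hM0 x (min δ (min δ1 (e/M))) (by positivity)
      obtain ⟨hs0, hs1⟩ := hs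
      rw [lt_min_iff, lt_min_iff, lt_div_iff₀ (by positivity)] at hs1
      refine ⟨s, ⟨hs0, hs1.1⟩, ?_, ?_⟩
      · refine ediam_le ?_
        rintro _ ⟨y, hy, rfl⟩ _ ⟨z, hz, rfl⟩
        rw [mem_closedBall] at hy hz
        rw [edist_dist]
        apply ENNReal.ofReal_le_ofReal
        have h1 := hδc (lt_of_le_of_lt hy hs1.2.1)
        have h2 := hδc (lt_of_le_of_lt hz hs1.2.1)
        linarith [dist_triangle_right (f y) (f z) (f x)]
      · have hsub : closedBall x (M * s) ⊆ W := by
          refine (closedBall_subset_closedBall (by linarith [hs1.2.2] : M * s ≤ e)).trans ?_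
          exact closedBall_subset_cthickening (hNK hx) e
        refine aux_alg d α hd0 hα s hs0 _ _ _ _ hc0 hct ?_ ?_
        · rw [← ENNReal.le_rpow_inv_iff hα0]
          refine ediam_le ?_
          rintro _ ⟨y, hy, rfl⟩ _ ⟨z, hz, rfl⟩
          rw [ENNReal.le_rpow_inv_iff hα0, edist_eq_enorm_sub]
          refine (hosc D D' f Df hf hw x s hs0 (hsub.trans heD) y hy z hz).trans ?_
          have : ∫⁻ y in closedBall x (M * s), ‖Df y‖ₑ ^ α ≤ ν (closedBall x (M * s)) := by
            rw [hν, Measure.add_apply, hν₁, withDensity_apply _ measurableSet_closedBall, Measure.restrict_restrict measurableSet_closedBall,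
              inter_eq_left.2 hsub]
            exact le_add_self
          calc _ ≤ C * ENNReal.ofReal (s ^ (α - (d+1))) * (ENNReal.ofReal (2 * M ^ (d+1)) * ν (closedBall x s)) := by
                gcongr; exact this.trans hdb
            _ = _ := by rw [hC1]; ring
        · refine le_trans (le_of_eq ?_) (hvol _)
          rw [Measure.addHaar_closedBall _ _ hs0.le, finrank_euclideanSpace_fin, ← Real.rpow_natCast]
          push_cast
          rfl)
  rw [hνN, mul_zero] at hFi
  have h0 := (lintegral_eq_zero_iff hFm).1 (le_antisymm hFi (zero_le))
  filter_upwards [h0] with r hr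
  exact le_antisymm ((hF r).trans hr.le) (zero_le)


theorem aux_lip_level {n : ℕ} (d : ℝ) (hd : 0 ≤ d) (f : Eucl n → Eucl n) (A : Set (Eucl n)) (L : ℝ≥0)
    (hA : ∀ x ∈ A, DifferentiableAt ℝ f x ∧ ‖fderiv ℝ f x‖₊ < L) :
    μH[d] (f '' A) ≤ (L : ℝ≥0∞) ^ d * μH[d] A := by
  set E : ℕ → Set (Eucl n) := fun k => {x ∈ A | ∀ y ∈ A, dist y x < 1 / ((k:ℝ)+1) → dist (f y) (f x) ≤ L * dist y x} with hE
  have hmono : Monotone E := by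
    intro k l hkl x hx
    refine ⟨hx.1, fun y hy hyx => hx.2 y hy (hyx.trans_le ?_)⟩
    gcongr
  have hU : A = ⋃ k, E k := by
    refine subset_antisymm (fun x hx => ?_) (iUnion_subset fun k => sep_subset _ _)
    obtain ⟨h1, h2⟩ := hA x hx
    have h3 := h1.hasFDerivAt
    rw [hasFDerivAt_iff_isLittleO, Asymptotics.isLittleO_iff] at h3
    have h2' : ‖fderiv ℝ f x‖ < L := h2
    obtain ⟨ε, hε, h4⟩ := Metric.eventually_nhds_iff.1 (h3 (sub_pos.2 h2'))
    obtain ⟨k, hk⟩ := exists_nat_one_div_lt hε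
    refine mem_iUnion.2 ⟨k, hx, fun y hy hyx => ?_⟩
    have h5 := h4 (hyx.trans hk)
    rw [dist_eq_norm, dist_eq_norm]
    have h6 := (fderiv ℝ f x).le_opNorm (y - x)
    have h7 : ‖f y - f x‖ ≤ ‖f y - f x - fderiv ℝ f x (y - x)‖ + ‖fderiv ℝ f x (y - x)‖ := by
      have := norm_add_le (f y - f x - fderiv ℝ f x (y - x)) (fderiv ℝ f x (y - x))
      simpa using this
    nlinarith
  have hEk : ∀ k, μH[d] (f '' E k) ≤ (L : ℝ≥0∞) ^ d * μH[d] A := by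
    intro k
    set ε : ℝ := 1 / ((k:ℝ)+1) with hε
    have hε0 : 0 < ε := by positivity
    set B : ℕ → Set (Eucl n) := fun j => ball (TopologicalSpace.denseSeq (Eucl n) j) (ε/2) with hB
    set P := disjointed B with hP
    have hPm : ∀ j, MeasurableSet (P j) := fun j => MeasurableSet.disjointed (fun i => measurableSet_ball) j
    have hPd : Pairwise (Function.onFun Disjoint P) := disjoint_disjointed B
    have hPU : ⋃ j, P j = univ := by
      rw [hP, iUnion_disjointed, eq_univ_iff_forall]
      intro x
      obtain ⟨j, hj⟩ := (TopologicalSpace.denseRange_denseSeq (Eucl n)).exists_dist_lt x (half_pos hε0)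
      exact mem_iUnion.2 ⟨j, hj⟩
    calc μH[d] (f '' E k) ≤ μH[d] (⋃ j, f '' (E k ∩ P j)) := by
          refine measure_mono ?_
          rw [← image_iUnion, ← inter_iUnion, hPU, inter_univ]
      _ ≤ ∑' j, μH[d] (f '' (E k ∩ P j)) := measure_iUnion_le _
      _ ≤ ∑' j, (L : ℝ≥0∞) ^ d * μH[d] (E k ∩ P j) := by
          refine ENNReal.tsum_le_tsum fun j => ?_
          refine LipschitzOnWith.hausdorffMeasure_image_le (K := L) ?_ hd
          refine LipschitzOnWith.of_dist_le_mul fun x hx y hy => ?_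
          refine hy.1.2 x hx.1.1 ?_
          have h1 := disjointed_subset B j hx.2
          have h2 := disjointed_subset B j hy.2
          rw [hB, mem_ball] at h1 h2
          linarith [dist_triangle_right x y (TopologicalSpace.denseSeq (Eucl n) j)]
      _ = (L : ℝ≥0∞) ^ d * ∑' j, ((μH[d] : Measure (Eucl n)).restrict (E k)) (P j) := by
          rw [ENNReal.tsum_mul_left]
          congr 2
          ext j
          rw [Measure.restrict_apply (hPm j), inter_comm]
      _ = (L : ℝ≥0∞) ^ d * μH[d] (E k) := by
          rw [← measure_iUnion hPd hPm, hPU, Measure.restrict_apply_univ]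
      _ ≤ _ := by gcongr; exact sep_subset _ _
  conv_lhs => rw [hU, image_iUnion]
  rw [Monotone.measure_iUnion (fun k l hkl => image_mono (hmono hkl))]
  exact iSup_le hEk

theorem aux_area_le {n : ℕ} (d : ℕ) (hd : 1 ≤ d) (f : Eucl n → Eucl n) (A : Set (Eucl n)) (hAm : MeasurableSet A)
    (hAf : μH[(d:ℝ)] A ≠ ⊤) (hN : μH[(d:ℝ)] (f '' (A ∩ {x | ¬ DifferentiableAt ℝ f x})) = 0) :
    μH[(d:ℝ)] (f '' A) ≤ ∫⁻ x in A, ‖fderiv ℝ f x‖ₑ ^ d ∂(μH[(d:ℝ)] : Measure (Eucl n)) := by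
  have hd1 : (1:ℝ) ≤ d := by exact_mod_cast hd
  have hd0 : (0:ℝ) < d := by linarith
  set h : Eucl n → ℝ≥0∞ := fun x => ‖fderiv ℝ f x‖ₑ with hh
  have hhm : Measurable h := (measurable_fderiv ℝ f).enorm
  have key : ∀ δ : ℝ≥0, 0 < δ → μH[(d:ℝ)] (f '' A) ≤ ∫⁻ x in A, (h x + δ) ^ (d:ℝ) ∂(μH[(d:ℝ)] : Measure (Eucl n)) := by
    intro δ hδ
    set J : Eucl n → ℕ := fun x => ⌊‖fderiv ℝ f x‖ / δ⌋₊ with hJ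
    have hJm : Measurable J := Nat.measurable_floor.comp ((measurable_fderiv ℝ f).norm.div_const _)
    set B : ℕ → Set (Eucl n) := fun j => (A ∩ {x | DifferentiableAt ℝ f x}) ∩ J ⁻¹' {j} with hB
    have hBm : ∀ j, MeasurableSet (B j) := fun j =>
      (hAm.inter (measurableSet_of_differentiableAt ℝ f)).inter (hJm (measurableSet_singleton j))
    have hlow : ∀ j, ∀ x ∈ B j, ((j:ℝ) * δ) ≤ ‖fderiv ℝ f x‖ ∧ ‖fderiv ℝ f x‖ < (j+1) * δ := by
      intro j x hx
      have : J x = j := hx.2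
      have h1 := Nat.floor_le (show 0 ≤ ‖fderiv ℝ f x‖ / δ by positivity)
      have h2 := Nat.lt_floor_add_one (‖fderiv ℝ f x‖ / δ)
      simp only [hJ] at this
      rw [this] at h1 h2
      have hδ' : (0:ℝ) < δ := hδ
      rw [le_div_iff₀ hδ'] at h1
      rw [div_lt_iff₀ hδ'] at h2
      exact ⟨h1, h2⟩
    calc μH[(d:ℝ)] (f '' A) ≤ μH[(d:ℝ)] (f '' (A ∩ {x | ¬ DifferentiableAt ℝ f x}) ∪ ⋃ j, f '' B j) := by
          refine measure_mono ?_
          rintro _ ⟨x, hx, rfl⟩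
          by_cases hxd : DifferentiableAt ℝ f x
          · exact Or.inr (mem_iUnion.2 ⟨J x, x, ⟨⟨hx, hxd⟩, rfl⟩, rfl⟩)
          · exact Or.inl ⟨x, ⟨hx, hxd⟩, rfl⟩
      _ ≤ 0 + ∑' j, μH[(d:ℝ)] (f '' B j) := by
          refine (measure_union_le _ _).trans ?_
          rw [hN]
          gcongr
          exact measure_iUnion_le _
      _ ≤ ∑' j, ∫⁻ x in B j, (h x + δ) ^ (d:ℝ) ∂(μH[(d:ℝ)] : Measure (Eucl n)) := by
          rw [zero_add]
          refine ENNReal.tsum_le_tsum fun j => ?_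
          refine (aux_lip_level (d:ℝ) hd0.le f (B j) ((j+1) * δ) ?_).trans ?_
          · intro x hx
            refine ⟨hx.1.2, ?_⟩
            have := (hlow j x hx).2
            rw [← NNReal.coe_lt_coe]; push_cast; exact this
          · rw [← setLIntegral_const]
            refine setLIntegral_mono ((hhm.add_const _).pow_const _) fun x hx => ?_
            gcongr
            have := (hlow j x hx).1
            have e1 : (((j+1) * δ : ℝ≥0) : ℝ≥0∞) = ((j * δ : ℝ≥0) : ℝ≥0∞) + δ := by
              rw [← ENNReal.coe_add]; congr 1; ring
            rw [e1]
            gcongr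
            rw [hh]
            show ((j * δ : ℝ≥0) : ℝ≥0∞) ≤ ((‖fderiv ℝ f x‖₊ : ℝ≥0) : ℝ≥0∞)
            rw [ENNReal.coe_le_coe, ← NNReal.coe_le_coe]
            push_cast; exact this
      _ = ∫⁻ x in ⋃ j, B j, (h x + δ) ^ (d:ℝ) ∂(μH[(d:ℝ)] : Measure (Eucl n)) := by
          rw [lintegral_iUnion hBm]
          intro i j hij
          refine Set.disjoint_left.2 fun x hi hj => hij ?_
          exact hi.2.symm.trans hj.2
      _ ≤ _ := lintegral_mono_set (iUnion_subset fun j x hx => hx.1.1)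
  have key2 : ∀ δ : ℝ≥0, 0 < δ → μH[(d:ℝ)] (f '' A) ^ (1/(d:ℝ)) ≤
      (∫⁻ x in A, h x ^ (d:ℝ) ∂(μH[(d:ℝ)] : Measure (Eucl n))) ^ (1/(d:ℝ)) + δ * μH[(d:ℝ)] A ^ (1/(d:ℝ)) := by
    intro δ hδ
    refine (ENNReal.rpow_le_rpow (key δ hδ) (by positivity)).trans ?_
    refine (ENNReal.lintegral_Lp_add_le hhm.aemeasurable (aemeasurable_const (b := (δ:ℝ≥0∞))) hd1).trans ?_
    gcongr
    rw [setLIntegral_const, ENNReal.mul_rpow_of_nonneg _ _ (by positivity), ← ENNReal.rpow_mul, mul_one_div_cancel hd0.ne',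
      ENNReal.rpow_one]
  have hlim : Tendsto (fun k : ℕ => (∫⁻ x in A, h x ^ (d:ℝ) ∂(μH[(d:ℝ)] : Measure (Eucl n))) ^ (1/(d:ℝ)) +
      (ENNReal.ofReal (1/((k:ℝ)+1))) * μH[(d:ℝ)] A ^ (1/(d:ℝ))) atTop
      (𝓝 ((∫⁻ x in A, h x ^ (d:ℝ) ∂(μH[(d:ℝ)] : Measure (Eucl n))) ^ (1/(d:ℝ)))) := by
    have h1 := ENNReal.tendsto_ofReal tendsto_one_div_add_atTop_nhds_zero_nat
    have h2 := ENNReal.Tendsto.mul_const (b := μH[(d:ℝ)] A ^ (1/(d:ℝ))) h1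
      (Or.inr (ENNReal.rpow_ne_top_of_nonneg (by positivity) hAf))
    simpa using tendsto_const_nhds.add h2
  have h3 := ge_of_tendsto' hlim (fun k => key2 (Real.toNNReal (1/((k:ℝ)+1))) (by simp; positivity))
  have h4 := (ENNReal.rpow_le_rpow_iff (by positivity)).1 h3
  simpa [ENNReal.rpow_natCast] using h4

theorem aux_area_int {n : ℕ} (d : ℕ) (hd : 1 ≤ d) (f : Eucl n → Eucl n) (S : Set (Eucl n)) (hSm : MeasurableSet S)
    (hfc : ContinuousOn f S)
    (hSf : μH[(d:ℝ)] S ≠ ⊤) (hN : μH[(d:ℝ)] (f '' (S ∩ {x | ¬ DifferentiableAt ℝ f x})) = 0)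
    (g : Eucl n → ℝ≥0∞) (hg : Measurable g) :
    ∫⁻ y in f '' S, g y ∂(μH[(d:ℝ)] : Measure (Eucl n)) ≤
      ∫⁻ x in S, g (f x) * ‖fderiv ℝ f x‖ₑ ^ d ∂(μH[(d:ℝ)] : Measure (Eucl n)) := by
  set ft : Eucl n → Eucl n := S.piecewise f (fun _ => 0) with hft
  have hftm : Measurable ft := hfc.measurable_piecewise continuousOn_const hSm
  have hfe : ∀ x ∈ S, ft x = f x := fun x hx => piecewise_eq_of_mem _ _ _ hx
  set h : Eucl n → ℝ≥0∞ := fun x => ‖fderiv ℝ f x‖ₑ ^ d with hh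
  have hhm : Measurable h := (measurable_fderiv ℝ f).enorm.pow_const _
  set κ : Measure (Eucl n) := Measure.map ft (((μH[(d:ℝ)] : Measure (Eucl n)).restrict S).withDensity h) with hκ
  have hle : (μH[(d:ℝ)] : Measure (Eucl n)).restrict (f '' S) ≤ κ := by
    refine Measure.le_iff.2 fun B hB => ?_
    rw [Measure.restrict_apply hB, hκ, Measure.map_apply hftm hB, withDensity_apply _ (hftm hB),
      Measure.restrict_restrict (hftm hB)]
    have e : B ∩ f '' S = f '' (ft ⁻¹' B ∩ S) := by
      ext y
      constructor
      · rintro ⟨hy, x, hx, rfl⟩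
        exact ⟨x, ⟨by rw [mem_preimage, hfe x hx]; exact hy, hx⟩, rfl⟩
      · rintro ⟨x, ⟨hxB, hx⟩, rfl⟩
        rw [mem_preimage, hfe x hx] at hxB
        exact ⟨hxB, x, hx, rfl⟩
    rw [e]
    refine aux_area_le d hd f _ ((hftm hB).inter hSm) (ne_top_of_le_ne_top hSf (measure_mono inter_subset_right)) ?_
    refine measure_mono_null (image_mono ?_) hN
    exact inter_subset_inter_left _ inter_subset_right
  calc _ ≤ ∫⁻ y, g y ∂κ := lintegral_mono' hle le_rfl
    _ = ∫⁻ x in S, h x * g (ft x) ∂(μH[(d:ℝ)] : Measure (Eucl n)) := by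
        rw [hκ, lintegral_map hg hftm]
        exact lintegral_withDensity_eq_lintegral_mul _ hhm (hg.comp hftm)
    _ = _ := by
        refine setLIntegral_congr_fun hSm fun x hx => ?_
        simp only [hfe x hx, mul_comm, hh]


theorem aux_sphere_pos (d : ℕ) (hd : 1 ≤ d) (x₀ : Eucl (d+1)) (r : ℝ) (hr : 0 < r) : μH[(d:ℝ)] (sphere x₀ r) ≠ 0 := by
  have hd1 : (1:ℝ) ≤ d := by exact_mod_cast hd
  set π : Eucl (d+1) → (Fin d → ℝ) := fun x i => x i.castSucc with hπ
  have hL : LipschitzWith 1 π := by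
    refine LipschitzWith.of_dist_le_mul fun x y => ?_
    rw [NNReal.coe_one, one_mul, dist_pi_le_iff dist_nonneg]
    intro i
    have := PiLp.norm_apply_le (x - y) i.castSucc
    rw [dist_eq_norm, dist_eq_norm]
    simpa [hπ] using this
  have h1 := hL.hausdorffMeasure_image_le (d := (d:ℝ)) (by positivity) (sphere x₀ r)
  have h2 : (μH[(d:ℝ)] : Measure (Fin d → ℝ)) = volume := by
    have := hausdorffMeasure_pi_real (ι := Fin d)
    rwa [Fintype.card_fin] at this
  have hsub : ball (π x₀) (r / d) ⊆ π '' sphere x₀ r := by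
    intro z hz
    rw [mem_ball, dist_pi_lt_iff (by positivity)] at hz
    set q : ℝ := ∑ i, (z i - x₀ i.castSucc) ^ 2 with hq
    have hq2 : q ≤ r ^ 2 := by
      have : q ≤ ∑ _i : Fin d, (r / d) ^ 2 := by
        refine Finset.sum_le_sum fun i _ => ?_
        have := (hz i).le
        rw [Real.dist_eq] at this
        exact sq_le_sq' (abs_le.1 this).1 (abs_le.1 this).2
      rw [Finset.sum_const, Finset.card_univ, Fintype.card_fin, nsmul_eq_mul] at this
      refine this.trans ?_
      have : (d:ℝ) * (r / d) ^ 2 = r ^ 2 / d := by field_simp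
      rw [this]
      exact div_le_self (by positivity) hd1
    refine ⟨WithLp.toLp 2 (Fin.snoc (α := fun _ => ℝ) z (x₀ (Fin.last d) + Real.sqrt (r ^ 2 - q))), ?_, ?_⟩
    · rw [mem_sphere, EuclideanSpace.dist_eq, Fin.sum_univ_castSucc]
      simp only [Fin.snoc_castSucc, Fin.snoc_last, Real.dist_eq, sq_abs, add_sub_cancel_left]
      rw [Real.sq_sqrt (by linarith), ← hq, add_sub_cancel, Real.sqrt_sq hr.le]
    · ext i
      simp [hπ]
  intro h0
  rw [h0, mul_zero, h2] at h1
  have : volume (ball (π x₀) (r / d)) = 0 := le_antisymm ((measure_mono hsub).trans h1) (zero_le)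
  exact (measure_ball_pos volume (π x₀) (by positivity : 0 < r / d)).ne' this

theorem aux_shell_null {n : ℕ} (hn : 0 < n) (x₀ : Eucl n) (Z : Set ℝ) (hZm : MeasurableSet Z) (hZ : volume Z = 0) :
    volume {x : Eucl n | dist x x₀ ∈ Z} = 0 := by
  have : Nonempty (Fin n) := ⟨⟨0, hn⟩⟩
  set N : Set (Eucl n) := {x | ‖x‖ ∈ Z} with hN
  have hm : MeasurableSet {q : Eucl n × ℝ | q.2 * ‖q.1‖ ∉ Z} :=
    (measurable_snd.mul measurable_fst.norm) hZm.compl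
  have h1 : ∀ᵐ x : Eucl n, ∀ᵐ t : ℝ, t * ‖x‖ ∉ Z := by
    have hne : ∀ᵐ x : Eucl n, x ≠ 0 := by
      rw [ae_iff]; simp
    filter_upwards [hne] with x hx
    rw [ae_iff]
    have := Real.volume_preimage_mul_right (norm_ne_zero_iff.2 hx) Z
    rw [hZ, mul_zero] at this
    refine measure_mono_null (fun t ht => ?_) this
    simpa using ht
  have h2 := (Measure.ae_ae_comm hm).1 h1
  have hnb : NeBot (ae (volume.restrict (Ioi (0:ℝ)))) := by
    rw [ae_neBot, Ne, Measure.restrict_eq_zero]; simp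
  obtain ⟨t, ht, ht0⟩ := ((ae_restrict_of_ae h2).and (ae_restrict_mem (measurableSet_Ioi (a := (0:ℝ))))).exists
  rw [mem_Ioi] at ht0
  have h3 : volume ((fun x : Eucl n => t • x) ⁻¹' N) = 0 := by
    rw [ae_iff] at ht
    refine measure_mono_null ?_ ht
    intro x hx
    simp only [hN, mem_preimage, mem_ofPred_eq, norm_smul, Real.norm_eq_abs, abs_of_pos ht0] at hx
    simpa using hx
  rw [Measure.addHaar_preimage_smul volume ht0.ne'] at h3
  have h4 : volume N = 0 := by
    rcases mul_eq_zero.1 h3 with h | h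
    · exfalso
      have : 0 < |(t ^ Module.finrank ℝ (Eucl n))⁻¹| := by positivity
      rw [ENNReal.ofReal_eq_zero] at h
      linarith
    · exact h
  have hNm : MeasurableSet N := measurable_norm hZm
  have := (measurePreserving_sub_right volume x₀).measure_preimage hNm.nullMeasurableSet
  rw [h4] at this
  rw [← this]
  refine congrArg _ ?_
  ext x
  simp [hN, dist_eq_norm]

theorem aux_ball_sub {n : ℕ} (D : Set (Eucl n)) (x₀ : Eucl n) (hx₀ : x₀ ∈ D) (ε₀ : ℝ) (hε₀ : 0 < ε₀)
    (h : ENNReal.ofReal ε₀ < EMetric.infEdist x₀ (frontier D)) : closedBall x₀ ε₀ ⊆ D := by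
  intro y hy
  by_contra hyD
  have hc : IsPreconnected (closedBall x₀ ε₀) := (convex_closedBall _ _).isPreconnected
  have hnf : ∀ z ∈ closedBall x₀ ε₀, z ∉ frontier D := by
    intro z hz hzf
    have h1 := h.trans_le (Metric.infEDist_le_edist_of_mem hzf)
    rw [edist_dist, dist_comm] at h1
    exact absurd (ENNReal.ofReal_le_ofReal hz) (not_le.2 h1)
  obtain ⟨z, hz, hz1, hz2⟩ := hc (interior D) (closure D)ᶜ isOpen_interior isClosed_closure.isOpen_compl
    (fun z hz => by
      by_cases h1 : z ∈ closure D
      · left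
        by_contra h2
        exact hnf z hz ⟨h1, h2⟩
      · exact Or.inr h1)
    ⟨x₀, mem_closedBall_self hε₀.le, by
      by_contra h2
      exact hnf x₀ (mem_closedBall_self hε₀.le) ⟨subset_closure hx₀, h2⟩⟩
    ⟨y, hy, fun h1 => hnf y hy ⟨h1, fun h2 => hyD (interior_subset h2)⟩⟩
  exact hz2 (subset_closure (interior_subset hz1))

theorem aux_sint {n k : ℕ} (S : Surface n k) (hS : InjOn S.toFun S.dom) (T : Set (Eucl n)) (hT : S.toFun '' S.dom = T)
    (hTm : MeasurableSet T) (ρ : Eucl n → ℝ≥0∞) : S.sint ρ = ∫⁻ y in T, ρ y ∂(μH[(k:ℝ)] : Measure (Eucl n)) := by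
  rw [Surface.sint, ← lintegral_indicator hTm]
  refine lintegral_congr fun y => ?_
  by_cases hy : y ∈ T
  · rw [indicator_of_mem hy, Surface.mult]
    rw [← hT] at hy
    obtain ⟨x, hx, rfl⟩ := hy
    have : S.dom ∩ S.toFun ⁻¹' {S.toFun x} = {x} := by
      ext z
      constructor
      · rintro ⟨hz, hzx⟩
        exact hS hz hx hzx
      · rintro rfl
        exact ⟨hx, rfl⟩
    rw [this, encard_singleton]
    simp
  · rw [indicator_of_notMem hy, Surface.mult]
    have : S.dom ∩ S.toFun ⁻¹' {y} = ∅ := by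
      rw [eq_empty_iff_forall_notMem]
      rintro z ⟨hz, hzy⟩
      exact hy (hT ▸ ⟨z, hz, hzy⟩)
    rw [this]
    simp

theorem aux_final (d : ℕ) (hd : 2 ≤ d) (α : ℝ) (hα : (d:ℝ) < α) (D D' : Set (Eucl (d+1)))
    (f : Eucl (d+1) → Eucl (d+1)) (Df : Eucl (d+1) → Eucl (d+1) →L[ℝ] Eucl (d+1)) (hD : IsOpen D)
    (hf : IsHomeoOn f D D') (hw : IsWeakDerivOn D f Df)
    (hI : ∀ K ⊆ D, IsCompact K → ∫⁻ x in K, ‖Df x‖ₑ ^ α < ⊤) (hfd : HasFiniteDistortionOn D Df)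
    (p : ℝ) (hp : 0 < p) (x₀ : Eucl (d+1)) (hx₀ : x₀ ∈ D) :
    IsLowerQHomeoAt D f (distortionKp p Df) p x₀ (EMetric.infEdist x₀ (frontier D)) := by
  intro ε ε₀ hε hεε hd₀
  have hε₀ : 0 < ε₀ := hε.trans hεε
  have hKD := aux_ball_sub D x₀ hx₀ ε₀ hε₀ hd₀
  have hident := aux_diff_ident d hd α hα D D' f Df hD hf hw hI
  set R := ringA x₀ ε ε₀ with hR
  have hRo : IsOpen R := by
    have h1 : Continuous fun x : Eucl (d+1) => dist x x₀ := by fun_prop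
    exact (isOpen_lt continuous_const h1).inter (isOpen_lt h1 continuous_const)
  have hRK : R ⊆ closedBall x₀ ε₀ := fun x hx => hx.2.le
  have hRD : R ⊆ D := hRK.trans hKD
  set Df' := fderiv ℝ f with hDf'
  have hDfm : Measurable Df' := measurable_fderiv ℝ f
  set N : Set (Eucl (d+1)) := closedBall x₀ ε₀ ∩ {x | ¬ DifferentiableAt ℝ f x} with hN
  have hN0 : volume N = 0 := by
    have h1 : ∀ᵐ x ∂(volume.restrict D), DifferentiableAt ℝ f x := by
      filter_upwards [hident] with x hx using hx.differentiableAt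
    rw [ae_restrict_iff' hD.measurableSet, ae_iff] at h1
    refine measure_mono_null ?_ h1
    rintro x ⟨hx, hx'⟩ hcon
    exact hx' (hcon (hKD hx))
  have hlus := aux_lusin d hd α hα D D' f Df hD hf hw hI x₀ _ (isCompact_closedBall x₀ ε₀) hKD N inter_subset_left hN0
  have hgood : ∀ᵐ r : ℝ, μH[(d:ℝ)] (sphere x₀ r) < ⊤ ∧ μH[(d:ℝ)] (f '' (N ∩ sphere x₀ r)) = 0 :=
    (aux_sphere_fin d (by omega) x₀).and hlus
  rw [ae_iff] at hgood
  set Z' := toMeasurable volume {r : ℝ | ¬ (μH[(d:ℝ)] (sphere x₀ r) < ⊤ ∧ μH[(d:ℝ)] (f '' (N ∩ sphere x₀ r)) = 0)} with hZ'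
  have hZ'0 : volume Z' = 0 := by rw [hZ', measure_toMeasurable]; exact hgood
  have hZ'm : MeasurableSet Z' := measurableSet_toMeasurable _ _
  have hsph : ∀ r ∈ Ioo ε ε₀, sphere x₀ r ⊆ R := by
    intro r hr x hx
    rw [mem_sphere] at hx
    exact ⟨by rw [hx]; exact hr.1, by rw [hx]; exact hr.2⟩
  refine le_iInf₂ fun ρ' hρ' => ?_
  obtain ⟨hρ'm, hρ'a⟩ := hρ'
  set ft : Eucl (d+1) → Eucl (d+1) := R.piecewise f (fun _ => 0) with hft
  have hftm : Measurable ft := (hf.continuousOn.mono hRD).measurable_piecewise continuousOn_const hRo.measurableSet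
  have hfte : ∀ x ∈ R, ft x = f x := fun x hx => piecewise_eq_of_mem _ _ _ hx
  set ρ : Eucl (d+1) → ℝ≥0∞ := fun x => ρ' (ft x) * ‖Df' x‖ₑ with hρ
  have hρm : Measurable ρ := (hρ'm.comp hftm).mul hDfm.enorm
  refine iInf₂_le_of_le ρ ⟨hρm, ?_⟩ ?_
  · -- extensive admissibility
    set ρi : Eucl (d+1) → ℝ≥0∞ := indicator {x | dist x x₀ ∈ Z'} (fun _ => ⊤) with hρi
    have hm1 : MeasurableSet {x : Eucl (d+1) | dist x x₀ ∈ Z'} := by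
      have h1 : Measurable fun x : Eucl (d+1) => dist x x₀ := by fun_prop
      exact h1 hZ'm
    have hρim : Measurable ρi := measurable_const.indicator hm1
    refine le_antisymm ?_ (zero_le)
    refine iInf₂_le_of_le ρi ⟨hρim, ?_⟩ ?_
    · rintro S ⟨⟨r, hr, hSne, hSi, hSim⟩, hbad⟩
      have hr0 : 0 < r := hε.trans hr.1
      rw [inter_eq_left.2 ((hsph r hr).trans hRD)] at hSim
      have hsm : MeasurableSet (sphere x₀ r) := isClosed_sphere.measurableSet
      have hrZ : r ∈ Z' := by
        refine subset_toMeasurable _ _ ?_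
        rintro ⟨hfin, hnull⟩
        refine hbad ?_
        rw [aux_sint S hSi _ hSim hsm]
        set S' : Surface (d+1) (d+1-1) := ⟨S.dom, S.isOpen_dom, f ∘ S.toFun, by
          refine (hf.continuousOn.mono ((hsph r hr).trans hRD)).comp S.continuousOn ?_
          rw [← hSim]; exact mapsTo_image _ _⟩ with hS'
        have hSD : MapsTo S.toFun S.dom D := fun x hx => hRD (hsph r hr (hSim ▸ mem_image_of_mem _ hx))
        have hS'i : InjOn S'.toFun S'.dom := hf.injOn.comp hSi hSD
        have hS'im : S'.toFun '' S'.dom = f '' sphere x₀ r := by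
          rw [← hSim, ← image_comp]
        have hcs : ContinuousOn f (sphere x₀ r) := hf.continuousOn.mono ((hsph r hr).trans hRD)
        have hfm : MeasurableSet (f '' sphere x₀ r) :=
          ((isCompact_sphere x₀ r).image_of_continuousOn hcs).isClosed.measurableSet
        have h1 := hρ'a S' ⟨S, ⟨r, hr, hSne, hSi, by rw [inter_eq_left.2 ((hsph r hr).trans hRD)]; exact hSim⟩,
          rfl, fun x _ => rfl⟩
        rw [aux_sint S' hS'i _ hS'im hfm] at h1
        refine h1.trans ?_
        refine (aux_area_int d (by omega) f (sphere x₀ r) hsm hcs hfin.ne ?_ (fun y => ρ' y ^ d)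
          (hρ'm.pow_const _)).trans (le_of_eq ?_)
        · refine measure_mono_null (image_mono ?_) hnull
          intro x hx
          exact ⟨⟨hRK (hsph r hr hx.1), hx.2⟩, hx.1⟩
        · refine setLIntegral_congr_fun hsm fun x hx => ?_
          simp only [hρ, hfte x (hsph r hr hx), Nat.add_sub_cancel, mul_pow, hDf']
      rw [aux_sint S hSi _ hSim hsm]
      have : ∫⁻ y in sphere x₀ r, ρi y ^ (d+1-1) ∂(μH[((d+1-1 : ℕ):ℝ)] : Measure (Eucl (d+1))) =
          ∫⁻ y in sphere x₀ r, ⊤ ∂(μH[(d:ℝ)] : Measure (Eucl (d+1))) := by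
        refine setLIntegral_congr_fun hsm fun x hx => ?_
        rw [mem_sphere] at hx
        have hxm : x ∈ {x : Eucl (d+1) | dist x x₀ ∈ Z'} := by
          show dist x x₀ ∈ Z'
          rw [hx]; exact hrZ
        simp only [hρi, indicator_of_mem hxm]
        exact ENNReal.top_pow (by omega)
      rw [this, setLIntegral_const, ENNReal.top_mul (aux_sphere_pos d (by omega) x₀ r hr0)]
      exact le_top
    · have h0 := aux_shell_null (Nat.succ_pos d) x₀ Z' hZ'm hZ'0
      refine le_of_eq ((lintegral_eq_zero_iff (hρim.pow_const _)).2 ?_)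
      have : ∀ᵐ x : Eucl (d+1), dist x x₀ ∉ Z' := by
        rw [ae_iff]; simpa using h0
      filter_upwards [this] with x hx
      have hxm : x ∉ {x : Eucl (d+1) | dist x x₀ ∈ Z'} := hx
      simp only [hρi, indicator_of_notMem hxm]
      exact ENNReal.zero_rpow_of_pos hp
  · -- the integral estimate
    obtain ⟨K, hKm, hK⟩ := hfd
    set G := {x | DifferentiableAt ℝ f x} with hG
    have hGm : MeasurableSet G := measurableSet_of_differentiableAt ℝ f
    have hsub : volume.restrict R ≤ volume.restrict D := Measure.restrict_mono hRD le_rfl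
    have e1 : ∫⁻ x in R, ρ x ^ p / distortionKp p Df x ≤ ∫⁻ x in R, ENNReal.ofReal |(Df' x).det| * ρ' (f x) ^ p := by
      refine lintegral_mono_ae ?_
      filter_upwards [ae_mono hsub hident, ae_mono hsub hK, ae_restrict_mem hRo.measurableSet] with x hx hKx hxR
      have hfx : Df' x = Df x := hx.fderiv
      simp only [hρ, hfte x hxR, hfx]
      obtain ⟨hK1, hK2⟩ := hKx
      by_cases hdet : (Df x).det = 0
      · rw [hdet, mul_zero] at hK2
        have hn0 : ‖Df x‖ = 0 := by
          have := le_antisymm hK2 (by positivity)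
          exact pow_eq_zero_iff (by omega) |>.1 this
        have : ‖Df x‖ₑ = 0 := by rw [← ofReal_norm, hn0, ENNReal.ofReal_zero]
        rw [this, mul_zero, ENNReal.zero_rpow_of_pos hp, ENNReal.zero_div]
        exact zero_le
      · have hpos : 0 < (Df x).det := by
          have h1 : 0 ≤ K x * (Df x).det := le_trans (by positivity) hK2
          have h2 : 0 ≤ (Df x).det := nonneg_of_mul_nonneg_right h1 (by linarith)
          exact lt_of_le_of_ne h2 (Ne.symm hdet)
        have hn0 : 0 < ‖Df x‖ := by
          rw [norm_pos_iff]
          intro h0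
          apply hdet
          rw [h0]
          have : (0 : Eucl (d+1) →L[ℝ] Eucl (d+1)).det = LinearMap.det (0 : Eucl (d+1) →ₗ[ℝ] Eucl (d+1)) := rfl
          rw [this, LinearMap.det_zero, finrank_euclideanSpace_fin]
          simp
        rw [distortionKp, if_pos hdet, ENNReal.mul_rpow_of_nonneg _ _ hp.le, ← ofReal_norm,
          ENNReal.ofReal_rpow_of_pos hn0, abs_of_pos hpos, ENNReal.ofReal_div_of_pos hpos]
        have ha : ENNReal.ofReal (‖Df x‖ ^ p) ≠ 0 := by
          rw [Ne, ENNReal.ofReal_eq_zero, not_le]; positivity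
        have hb : ENNReal.ofReal (Df x).det ≠ 0 := by
          rw [Ne, ENNReal.ofReal_eq_zero, not_le]; exact hpos
        set a := ENNReal.ofReal (‖Df x‖ ^ p) with hadef
        set b := ENNReal.ofReal (Df x).det with hbdef
        have hat : a ≠ ⊤ := ENNReal.ofReal_ne_top
        have hbt : b ≠ ⊤ := ENNReal.ofReal_ne_top
        refine le_of_eq ?_
        rw [div_eq_mul_inv, div_eq_mul_inv a b, ENNReal.mul_inv (Or.inl ha) (Or.inl hat), inv_inv]
        calc ρ' (f x) ^ p * a * (a⁻¹ * b) = (a * a⁻¹) * (b * ρ' (f x) ^ p) := by ring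
          _ = _ := by rw [ENNReal.mul_inv_cancel ha hat, one_mul]
    refine e1.trans ?_
    have e2 : ∫⁻ x in R, ENNReal.ofReal |(Df' x).det| * ρ' (f x) ^ p =
        ∫⁻ x in R ∩ G, ENNReal.ofReal |(Df' x).det| * ρ' (f x) ^ p := by
      refine setLIntegral_congr (ae_eq_set.2 ⟨measure_mono_null ?_ hN0, ?_⟩)
      · rintro x ⟨hx, hx'⟩
        exact ⟨hRK hx, fun h => hx' ⟨hx, h⟩⟩
      · rw [sdiff_eq_empty.2 inter_subset_left, measure_empty]
    rw [e2, ← lintegral_image_eq_lintegral_abs_det_fderiv_mul volume (hRo.measurableSet.inter hGm)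
      (fun x hx => (hx.2.hasFDerivAt).hasFDerivWithinAt) (hf.injOn.mono (inter_subset_left.trans hRD)) (fun y => ρ' y ^ p)]
    exact setLIntegral_le_lintegral _ _

/-- any homeomorphism of finite distortion between domains in `ℝⁿ`, `n ≥ 3`, of
the Sobolev class `W^{1,α}_loc` with `α > n-1`, is a lower `K_p(·,f)`-homeomorphism w.r.t.
the `p`-modulus at every point, for every `p > n-1`. -/
theorem stmt_7 (n : ℕ) (hn : 3 ≤ n) (α : ℝ) (hα : (n : ℝ) - 1 < α)
    (D D' : Set (Eucl n))
    (hDopen : IsOpen D) (hDconn : IsConnected D)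
    (hD'open : IsOpen D') (hD'conn : IsConnected D')
    (f : Eucl n → Eucl n) (Df : Eucl n → Eucl n →L[ℝ] Eucl n)
    (hf : IsHomeoOn f D D')
    (hsob : MemOrliczSobolevOn (fun t => t ^ α) D f Df)
    (hfd : HasFiniteDistortionOn D Df)
    (p : ℝ) (hp : (n : ℝ) - 1 < p) (x₀ : Eucl n) (hx₀ : x₀ ∈ D) :
    IsLowerQHomeoAt D f (distortionKp p Df) p x₀ (EMetric.infEdist x₀ (frontier D)) := by
  obtain ⟨d, rfl⟩ : ∃ d, n = d + 1 := ⟨n - 1, by omega⟩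
  have hα' : (d:ℝ) < α := by push_cast at hα; linarith
  have hp' : (d:ℝ) < p := by push_cast at hp; linarith
  have hd0 : (0:ℝ) ≤ d := by positivity
  refine aux_final d (by omega) α hα' D D' f Df hDopen hf hsob.1 ?_ hfd p (by linarith) x₀ hx₀
  intro K hK hKc
  refine lt_of_le_of_lt (lintegral_mono fun x => ?_) (hsob.2 K hK hKc)
  rw [← ofReal_norm, ENNReal.ofReal_rpow_of_nonneg (norm_nonneg _) (by linarith)]
  exact ENNReal.ofReal_le_ofReal (Real.rpow_le_rpow (norm_nonneg _) (aux_frob _) (by linarith))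
end

section
/- Let n ≥ 3, p ∈ (n, n + 1/(n−2)), and define f:B^n→B^n (B^n the open unit ball in ℝ^n) by f(x) = (x/|x|)·(1 + (p−n)∫_{|x|}^1 dt/(t^{p−n+1}(ln(e/t))^{(p−n+1)/(n−1)}))^{−1/(p−n)} for x ≠ 0 and f(0) = 0. Then for every x ∈ B^n∖{0} the distortion satisfies K_p(x,f) = (ln(e/|x|))^{(p−n+1)/(n−1)}. -/
open MeasureTheory Metric Set Filter
open scoped ENNReal NNReal Topology RealInnerProductSpace Classical

/-- The radial profile `g(r)` of the example mapping. -/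
noncomputable def gfun (n : ℕ) (p : ℝ) (r : ℝ) : ℝ :=
  (1 + (p - (n:ℝ)) * ∫ t in r..(1:ℝ),
      1 / (t ^ (p - (n:ℝ) + 1) *
        Real.log (Real.exp 1 / t) ^ ((p - (n:ℝ) + 1) / ((n:ℝ) - 1)))) ^ (-(1 / (p - (n:ℝ))))

/-- The example radial homeomorphism `f(x) = (x/|x|) g(|x|)`, `f(0) = 0`. -/
noncomputable def fmap (n : ℕ) (p : ℝ) (x : Eucl n) : Eucl n :=
  if x = 0 then 0 else (gfun n p ‖x‖ / ‖x‖) • x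


theorem aux_det {n : ℕ} (hn : 1 ≤ n) (u : Eucl n) (hu : ‖u‖ = 1) (a b : ℝ) (ha : a ≠ 0) :
    (a • ContinuousLinearMap.id ℝ (Eucl n) +
      (b - a) • (innerSL ℝ u).smulRight u).det = a ^ (n - 1) * b := by
  have h : ((a • ContinuousLinearMap.id ℝ (Eucl n) +
      (b - a) • (innerSL ℝ u).smulRight u : Eucl n →L[ℝ] Eucl n) : Eucl n →ₗ[ℝ] Eucl n)
      = a • LinearMap.transvection (((b - a) / a) • (innerSL ℝ u).toLinearMap) u := by
    ext v : 1
    simp [LinearMap.transvection, smul_smul]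
    congr 1
    field_simp
  rw [ContinuousLinearMap.det, h, LinearMap.det_smul, LinearMap.transvection.det]
  simp [hu]
  obtain ⟨m, rfl⟩ : ∃ m, n = m + 1 := ⟨n - 1, by omega⟩
  simp [pow_succ]
  field_simp
  ring

theorem aux_norm {n : ℕ} (hn : 2 ≤ n) (u : Eucl n) (hu : ‖u‖ = 1) (a b : ℝ)
    (hb : 0 < b) (hab : b ≤ a) :
    ‖a • ContinuousLinearMap.id ℝ (Eucl n) +
      (b - a) • (innerSL ℝ u).smulRight u‖ = a := by
  have ha : 0 < a := hb.trans_le hab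
  apply le_antisymm
  · refine ContinuousLinearMap.opNorm_le_bound _ ha.le fun v => ?_
    refine (sq_le_sq₀ (norm_nonneg _) (by positivity)).1 ?_
    simp only [ContinuousLinearMap.add_apply, ContinuousLinearMap.smul_apply, ContinuousLinearMap.id_apply,
      ContinuousLinearMap.smulRight_apply, innerSL_apply_apply]
    rw [@norm_add_sq_real, smul_smul, norm_smul, norm_smul, inner_smul_left, inner_smul_right, hu,
      real_inner_comm, mul_pow, mul_pow, mul_pow, Real.norm_eq_abs, Real.norm_eq_abs, sq_abs, sq_abs]
    simp only [conj_trivial]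
    have : b ^ 2 ≤ a ^ 2 := by gcongr
    nlinarith [mul_nonneg (sub_nonneg.2 this) (sq_nonneg (inner ℝ v u))]
  · have : ∃ v : Eucl n, v ≠ 0 ∧ inner ℝ u v = 0 := by
      have h1 : (ℝ ∙ u)ᗮ ≠ ⊥ := by
        intro h
        have h2 := Submodule.finrank_add_finrank_orthogonal (ℝ ∙ u)
        rw [h, finrank_bot, finrank_euclideanSpace_fin] at h2
        have := finrank_span_singleton (K := ℝ) (v := u) (by rintro rfl; simp at hu)
        omega
      obtain ⟨v, hv, hv0⟩ := Submodule.exists_mem_ne_zero_of_ne_bot h1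
      exact ⟨v, hv0, Submodule.mem_orthogonal_singleton_iff_inner_right.1 hv⟩
    obtain ⟨v, hv0, hv⟩ := this
    have h := ContinuousLinearMap.le_opNorm (a • ContinuousLinearMap.id ℝ (Eucl n) +
      (b - a) • (innerSL ℝ u).smulRight u) v
    have h3 : (a • ContinuousLinearMap.id ℝ (Eucl n) +
      (b - a) • (innerSL ℝ u).smulRight u) v = a • v := by simp [hv]
    rw [h3, norm_smul, Real.norm_eq_abs, abs_of_pos ha] at h
    exact le_of_mul_le_mul_right h (norm_pos_iff.2 hv0)

theorem aux_hasFDeriv {n : ℕ} (g : ℝ → ℝ) (g' : ℝ) (x : Eucl n) (hx : x ≠ 0)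
    (hg : HasDerivAt g g' ‖x‖) :
    HasFDerivAt (fun y : Eucl n => (g ‖y‖ / ‖y‖) • y)
      ((g ‖x‖ / ‖x‖) • ContinuousLinearMap.id ℝ (Eucl n) +
      (g' - g ‖x‖ / ‖x‖) • (innerSL ℝ (‖x‖⁻¹ • x)).smulRight (‖x‖⁻¹ • x)) x := by
  have hr : ‖x‖ ≠ 0 := norm_ne_zero_iff.2 hx
  have h1 : HasFDerivAt (fun y : Eucl n => ‖y‖) (‖x‖⁻¹ • innerSL ℝ x) x := by
    have := ((hasStrictFDerivAt_norm_sq x).hasFDerivAt).sqrt (by simp [hx])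
    simp only [Real.sqrt_sq (norm_nonneg _)] at this
    convert! this using 1
    ext v
    simp
    field_simp
  have h2 : HasDerivAt (fun r => g r / r) ((g' * ‖x‖ - g ‖x‖ * 1) / ‖x‖ ^ 2) ‖x‖ :=
    hg.div (hasDerivAt_id _) hr
  have h3 := (h2.comp_hasFDerivAt x h1).smul (hasFDerivAt_id x)
  convert! h3 using 1
  ext v i
  simp
  field_simp

theorem aux_real (a β r : ℝ) (ha : 0 < a) (hβ : 0 < β) (hr : 0 < r) (hr1 : r < 1) (G : ℝ → ℝ)
    (hG : G = fun r => (1 + a * ∫ t in r..(1:ℝ),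
      1 / (t ^ (a + 1) * Real.log (Real.exp 1 / t) ^ β)) ^ (-(1 / a))) :
    0 < G r ∧ HasDerivAt G ((G r / r) ^ (a + 1) / Real.log (Real.exp 1 / r) ^ β) r ∧
    (G r / r) ^ a ≤ Real.log (Real.exp 1 / r) ^ β := by
  have hlog : ∀ t, 0 < t → Real.log (Real.exp 1 / t) = 1 - Real.log t := by
    intro t ht
    rw [Real.log_div (Real.exp_ne_zero _) ht.ne', Real.log_exp]
  have hlog1 : ∀ t, 0 < t → t ≤ 1 → 1 ≤ Real.log (Real.exp 1 / t) := by
    intro t ht ht1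
    rw [hlog t ht]
    linarith [Real.log_nonpos ht.le ht1]
  set F : ℝ → ℝ := fun t => 1 / (t ^ (a + 1) * Real.log (Real.exp 1 / t) ^ β) with hF
  have hc : ∀ t, 0 < t → t ≤ 1 → ContinuousAt F t := by
    intro t ht ht1
    have hl := hlog1 t ht ht1
    have e1 : ContinuousAt (fun t : ℝ => Real.exp 1 / t) t :=
      continuousAt_const.div continuousAt_id ht.ne'
    have e2 := e1.log (by positivity)
    have e3 := e2.rpow_const (p := β) (Or.inl (by linarith))
    have e4 : ContinuousAt (fun t : ℝ => t ^ (a + 1)) t :=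
      continuousAt_id.rpow_const (Or.inl ht.ne')
    exact continuousAt_const.div (e4.mul e3) (by positivity)
  have hI : IntervalIntegrable F volume r 1 := by
    apply ContinuousOn.intervalIntegrable
    intro t ht
    rw [uIcc_of_le hr1.le] at ht
    exact (hc t (hr.trans_le ht.1) ht.2).continuousWithinAt
  have hL := hlog1 r hr hr1.le
  set L := Real.log (Real.exp 1 / r) with hLdef
  have hLβ : 1 ≤ L ^ β := Real.one_le_rpow hL hβ.le
  have hpow : IntervalIntegrable (fun t : ℝ => t ^ (-(a + 1))) volume r 1 := by
    apply intervalIntegral.intervalIntegrable_rpow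
    right
    rw [uIcc_of_le hr1.le]
    intro h
    linarith [h.1]
  have hval : ∫ t in r..(1:ℝ), t ^ (-(a + 1)) = (r ^ (-a) - 1) / a := by
    rw [integral_rpow]
    · have : -(a + 1) + 1 = -a := by ring
      rw [this, Real.one_rpow]
      field_simp
      ring
    · right
      refine ⟨by linarith, ?_⟩
      rw [uIcc_of_le hr1.le]
      intro h
      linarith [h.1]
  have hmono : (L ^ β)⁻¹ * ((r ^ (-a) - 1) / a) ≤ ∫ t in r..(1:ℝ), F t := by
    rw [← hval, ← intervalIntegral.integral_const_mul]
    apply intervalIntegral.integral_mono_on hr1.le (hpow.const_mul _) hI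
    intro t ht
    have ht0 : 0 < t := hr.trans_le ht.1
    have hl := hlog1 t ht0 ht.2
    have : Real.log (Real.exp 1 / t) ≤ L := by
      rw [hLdef, hlog t ht0, hlog r hr]
      linarith [Real.log_le_log hr ht.1]
    have h2 : Real.log (Real.exp 1 / t) ^ β ≤ L ^ β := by
      apply Real.rpow_le_rpow <;> linarith
    simp only [hF]
    rw [Real.rpow_neg ht0.le, one_div, mul_inv, mul_comm]
    gcongr
  set H : ℝ → ℝ := fun r => 1 + a * ∫ t in r..(1:ℝ), F t with hH
  have hra : 1 ≤ r ^ (-a) := Real.one_le_rpow_of_pos_of_le_one_of_nonpos hr hr1.le (by linarith)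
  have hHL : r ^ (-a) ≤ H r * L ^ β := by
    have h1 : (L ^ β)⁻¹ * (r ^ (-a) - 1) ≤ a * ∫ t in r..(1:ℝ), F t := by
      have := mul_le_mul_of_nonneg_left hmono ha.le
      calc _ = a * ((L ^ β)⁻¹ * ((r ^ (-a) - 1) / a)) := by field_simp
        _ ≤ _ := this
    have h2 : (1 + (L ^ β)⁻¹ * (r ^ (-a) - 1)) * L ^ β ≤ H r * L ^ β := by
      gcongr
      simp only [hH]; linarith
    have h3 : (1 + (L ^ β)⁻¹ * (r ^ (-a) - 1)) * L ^ β = L ^ β + r ^ (-a) - 1 := by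
      field_simp
      ring
    linarith
  have hHpos : 0 < H r := by
    by_contra! h
    nlinarith
  have hGH : ∀ r, G r = H r ^ (-(1 / a)) := by
    intro r; rw [hG]
  have hGpos : 0 < G r := by rw [hGH]; positivity
  have hGa : G r ^ a = (H r)⁻¹ := by
    rw [hGH, ← Real.rpow_mul hHpos.le]
    have : -(1 / a) * a = -1 := by field_simp
    rw [this, Real.rpow_neg_one]
  refine ⟨hGpos, ?_, ?_⟩
  · have hm : StronglyMeasurableAtFilter F (𝓝 r) volume := by
      apply ContinuousAt.stronglyMeasurableAtFilter isOpen_Ioo (s := Ioo 0 1)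
      · intro t ht; exact hc t ht.1 ht.2.le
      · exact ⟨hr, hr1⟩
    have d1 := intervalIntegral.integral_hasDerivAt_left hI hm (hc r hr hr1.le)
    have d2 : HasDerivAt H (a * -F r) r := (d1.const_mul a).const_add 1
    have d3 := d2.rpow_const (p := -(1 / a)) (Or.inl hHpos.ne')
    have : G = fun r => H r ^ (-(1 / a)) := funext hGH
    rw [this]
    convert! d3 using 1
    simp only []
    rw [← hGH, Real.rpow_sub_one hHpos.ne', ← hGH, Real.div_rpow hGpos.le hr.le,
      Real.rpow_add_one hGpos.ne', hGa]
    simp only [hF]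
    rw [← hLdef]
    field_simp
  · rw [Real.div_rpow hGpos.le hr.le, hGa]
    rw [Real.rpow_neg hr.le] at hHL
    have : 0 < r ^ a := by positivity
    rw [div_le_iff₀ this, inv_le_iff_one_le_mul₀ hHpos]
    rw [inv_le_iff_one_le_mul₀ this] at hHL
    linarith

/-- for the example radial mapping `f` of the unit ball, the distortion
satisfies `K_p(x,f) = (ln(e/|x|))^{(p-n+1)/(n-1)}` for every `x ∈ Bⁿ \ {0}`. -/
theorem stmt_14 (n : ℕ) (hn : 3 ≤ n) (p : ℝ)
    (hp : p ∈ Ioo (n : ℝ) ((n : ℝ) + 1 / ((n : ℝ) - 2)))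
    (x : Eucl n) (hx : x ∈ ball (0 : Eucl n) 1) (hx0 : x ≠ 0) :
    distortionKp p (fun y => fderiv ℝ (fmap n p) y) x =
      ENNReal.ofReal (Real.log (Real.exp 1 / ‖x‖) ^ ((p - (n:ℝ) + 1) / ((n:ℝ) - 1))) := by
  obtain ⟨hp1, -⟩ := hp
  have hn' : (3:ℝ) ≤ n := by exact_mod_cast hn
  have ha : 0 < p - n := by linarith
  have hβ : 0 < (p - (n:ℝ) + 1) / ((n:ℝ) - 1) := div_pos (by linarith) (by linarith)
  have hr : 0 < ‖x‖ := norm_pos_iff.2 hx0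
  have hr1 : ‖x‖ < 1 := by simpa using hx
  obtain ⟨hG, hd, hle⟩ := aux_real (p - n) _ ‖x‖ ha hβ hr hr1 (gfun n p) rfl
  set L := Real.log (Real.exp 1 / ‖x‖) ^ ((p - (n:ℝ) + 1) / ((n:ℝ) - 1)) with hL
  set T := gfun n p ‖x‖ / ‖x‖ with hT
  have hTpos : 0 < T := by positivity
  have hLpos : 0 < L := lt_of_lt_of_le (by positivity) hle
  have hfd := aux_hasFDeriv (gfun n p) _ x hx0 hd
  have hfe : fmap n p = fun y : Eucl n => (gfun n p ‖y‖ / ‖y‖) • y := by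
    funext y
    unfold fmap
    split_ifs with h
    · simp [h]
    · rfl
  have hfe2 := hfd.fderiv
  rw [← hfe, ← hT] at hfe2
  have hu : ‖(‖x‖⁻¹ • x)‖ = 1 := by
    rw [norm_smul, norm_inv, norm_norm, inv_mul_cancel₀ hr.ne']
  have hbpos : 0 < T ^ (p - n + 1) / L := by positivity
  have hba : T ^ (p - n + 1) / L ≤ T := by
    rw [div_le_iff₀ hLpos, Real.rpow_add_one hTpos.ne', mul_comm]
    gcongr
  have hdet := aux_det (by omega : 1 ≤ n) _ hu T (T ^ (p - n + 1) / L) hTpos.ne'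
  have hnorm := aux_norm (by omega : 2 ≤ n) _ hu T (T ^ (p - n + 1) / L) hbpos hba
  unfold distortionKp
  simp only []
  rw [← hfe2] at hdet hnorm
  rw [if_pos (by rw [hdet]; positivity), hdet, hnorm]
  congr 1
  have h4 : T ^ p = T ^ (n - 1) * T ^ (p - n + 1) := by
    rw [← Real.rpow_natCast, ← Real.rpow_add hTpos]
    congr 1
    rw [Nat.cast_sub (by omega)]
    push_cast
    ring
  rw [h4]
  field_simp
end

section
/- Let n ≥ 3 and p ∈ (n, n + 1/(n−2)). For r ∈ (0,1) set g(r) = (1 + (p−n)∫_r^1 dt/(t^{p−n+1}(ln(e/t))^{(p−n+1)/(n−1)}))^{−1/(p−n)}. Then g(r)/r → ∞ as r → 0+. Consequently, the homeomorphism f(x) = (x/|x|)·g(|x|), f(0)=0, of the unit ball satisfies limsup_{x→0} |f(x)−f(0)|/|x| = ∞, i.e., f is not Lipschitz (indeed not finitely Lipschitz) at the origin. -/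
open MeasureTheory Metric Set Filter
open scoped ENNReal NNReal Topology RealInnerProductSpace Classical

lemma aux_int (a b u v M : ℝ) (ha : 0 < a) (hb : 0 < b) (hu : 0 < u) (huv : u ≤ v) (hv : v ≤ 1)
    (hM : M = Real.log (Real.exp 1 / v)) :
    IntervalIntegrable (fun t => 1 / (t ^ (a + 1) * Real.log (Real.exp 1 / t) ^ b)) volume u v ∧
    a * (∫ t in u..v, 1 / (t ^ (a + 1) * Real.log (Real.exp 1 / t) ^ b)) ≤ u ^ (-a) * M ^ (-b) ∧
    0 ≤ ∫ t in u..v, 1 / (t ^ (a + 1) * Real.log (Real.exp 1 / t) ^ b) := by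
  have hL : ∀ t : ℝ, 0 < t → Real.log (Real.exp 1 / t) = 1 - Real.log t := by
    intro t ht
    rw [Real.log_div (Real.exp_pos 1).ne' ht.ne', Real.log_exp]
  have hv0 : 0 < v := hu.trans_le huv
  have hM1 : 1 ≤ M := by
    rw [hM, hL v hv0]; linarith [Real.log_nonpos hv0.le hv]
  have hML : ∀ t ∈ Icc u v, M ≤ Real.log (Real.exp 1 / t) := by
    intro t ht
    have ht0 : 0 < t := hu.trans_le ht.1
    rw [hM, hL v hv0, hL t ht0]
    linarith [Real.log_le_log ht0 ht.2]
  have hint : IntervalIntegrable (fun t => 1 / (t ^ (a + 1) * Real.log (Real.exp 1 / t) ^ b))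
      volume u v := by
    apply ContinuousOn.intervalIntegrable
    rw [uIcc_of_le huv]
    intro t ht
    have ht0 : 0 < t := hu.trans_le ht.1
    have hl : 0 < Real.log (Real.exp 1 / t) := by linarith [hML t ht]
    apply ContinuousAt.continuousWithinAt
    refine ContinuousAt.div continuousAt_const ?_ ?_
    · refine ContinuousAt.mul (Real.continuousAt_rpow_const _ _ (Or.inl ht0.ne')) ?_
      refine ContinuousAt.rpow_const ?_ (Or.inl hl.ne')
      refine ContinuousAt.log (continuousAt_const.div continuousAt_id ht0.ne') ?_
      exact (div_pos (Real.exp_pos 1) ht0).ne'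
    · positivity
  have hcont : IntervalIntegrable (fun t : ℝ => M ^ (-b) * t ^ (-a - 1)) volume u v := by
    apply ContinuousOn.intervalIntegrable
    rw [uIcc_of_le huv]
    intro t ht
    have ht0 : 0 < t := hu.trans_le ht.1
    exact (continuousAt_const.mul
      (Real.continuousAt_rpow_const _ _ (Or.inl ht0.ne'))).continuousWithinAt
  refine ⟨hint, ?_, ?_⟩
  · have h1 : (∫ t in u..v, 1 / (t ^ (a + 1) * Real.log (Real.exp 1 / t) ^ b)) ≤
        ∫ t in u..v, M ^ (-b) * t ^ (-a - 1) := by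
      apply intervalIntegral.integral_mono_on huv hint hcont
      intro t ht
      have ht0 : 0 < t := hu.trans_le ht.1
      have hl := hML t ht
      have e : -a - 1 = -(a + 1) := by ring
      rw [e, Real.rpow_neg (by linarith), Real.rpow_neg ht0.le, one_div, mul_inv, mul_comm]
      gcongr
    have h2 : (∫ t in u..v, M ^ (-b) * t ^ (-a - 1)) = M ^ (-b) * ((u ^ (-a) - v ^ (-a)) / a) := by
      rw [intervalIntegral.integral_const_mul, integral_rpow]
      · have e : -a - 1 + 1 = -a := by ring
        rw [e]
        field_simp
        ring
      · right
        refine ⟨by linarith, ?_⟩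
        rw [uIcc_of_le huv]
        intro h
        linarith [h.1]
    calc _ ≤ a * (M ^ (-b) * ((u ^ (-a) - v ^ (-a)) / a)) := by
            rw [← h2]; exact mul_le_mul_of_nonneg_left h1 ha.le
      _ = M ^ (-b) * (u ^ (-a) - v ^ (-a)) := by field_simp
      _ ≤ M ^ (-b) * u ^ (-a) := by
            apply mul_le_mul_of_nonneg_left
            · linarith [Real.rpow_pos_of_pos hv0 (-a)]
            · exact Real.rpow_nonneg (by linarith) _
      _ = _ := mul_comm _ _
  · apply intervalIntegral.integral_nonneg huv
    intro t ht
    have ht0 : 0 < t := hu.trans_le ht.1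
    have hl : 0 < Real.log (Real.exp 1 / t) := by linarith [hML t ht]
    positivity

lemma aux_tendsto (a b : ℝ) (ha : 0 < a) (hb : 0 < b) :
    Tendsto (fun r : ℝ => (1 + a * ∫ t in r..(1:ℝ),
      1 / (t ^ (a + 1) * Real.log (Real.exp 1 / t) ^ b)) ^ (-(1 / a)) / r) (𝓝[>] (0:ℝ)) atTop := by
  set F : ℝ → ℝ := fun r => 1 + a * ∫ t in r..(1:ℝ),
      1 / (t ^ (a + 1) * Real.log (Real.exp 1 / t) ^ b) with hF
  have hev : ∀ᶠ r : ℝ in 𝓝[>] (0:ℝ), r ∈ Ioo (0:ℝ) 1 := Ioo_mem_nhdsGT one_pos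
  have hF1 : ∀ r ∈ Ioo (0:ℝ) 1, 1 ≤ F r := by
    intro r hr
    have := (aux_int a b r 1 _ ha hb hr.1 hr.2.le le_rfl rfl).2.2
    simp only [hF]
    nlinarith
  have hbd : ∀ r ∈ Ioo (0:ℝ) 1,
      r ^ a * F r ≤ r ^ a + r ^ (a / 2) + (1 - Real.log r / 2) ^ (-b) := by
    intro r hr
    have hr0 := hr.1
    set s := r ^ (1 / 2 : ℝ) with hs
    have hs0 : 0 < s := Real.rpow_pos_of_pos hr0 _
    have hs1 : s ≤ 1 := Real.rpow_le_one hr0.le hr.2.le (by norm_num)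
    have hrs : r ≤ s := by
      have := Real.rpow_le_rpow_of_exponent_ge hr0 hr.2.le (show (1/2:ℝ) ≤ 1 by norm_num)
      rwa [Real.rpow_one] at this
    obtain ⟨i1, j1, -⟩ := aux_int a b r s _ ha hb hr0 hrs hs1 rfl
    obtain ⟨i2, j2, -⟩ := aux_int a b s 1 _ ha hb hs0 hs1 le_rfl rfl
    have hsplit := intervalIntegral.integral_add_adjacent_intervals i1 i2
    have e1 : Real.log (Real.exp 1 / s) = 1 - Real.log r / 2 := by
      rw [Real.log_div (Real.exp_pos 1).ne' hs0.ne', Real.log_exp, hs, Real.log_rpow hr0]; ring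
    have e2 : Real.log (Real.exp 1 / 1) = 1 := by simp
    rw [e1] at j1
    rw [e2, Real.one_rpow, mul_one] at j2
    have e3 : r ^ a * r ^ (-a) = 1 := by rw [← Real.rpow_add hr0]; simp
    have e4 : r ^ a * s ^ (-a) = r ^ (a / 2) := by
      rw [hs, ← Real.rpow_mul hr0.le, ← Real.rpow_add hr0]; congr 1; ring
    have hra : 0 < r ^ a := Real.rpow_pos_of_pos hr0 _
    have hle : F r ≤ 1 + (r ^ (-a) * (1 - Real.log r / 2) ^ (-b) + s ^ (-a)) := by
      simp only [hF]
      rw [← hsplit, mul_add]; linarith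
    calc r ^ a * F r ≤ r ^ a * (1 + (r ^ (-a) * (1 - Real.log r / 2) ^ (-b) + s ^ (-a))) :=
          mul_le_mul_of_nonneg_left hle hra.le
      _ = r ^ a + r ^ a * s ^ (-a) + (r ^ a * r ^ (-a)) * (1 - Real.log r / 2) ^ (-b) := by ring
      _ = _ := by rw [e3, e4, one_mul]
  have hpow : ∀ c : ℝ, 0 < c → Tendsto (fun r : ℝ => r ^ c) (𝓝[>] (0:ℝ)) (𝓝 0) := by
    intro c hc
    have := (Real.continuousAt_rpow_const 0 c (Or.inr hc.le)).tendsto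
    rw [Real.zero_rpow hc.ne'] at this
    exact this.mono_left nhdsWithin_le_nhds
  have hlog : Tendsto (fun r : ℝ => (1 - Real.log r / 2) ^ (-b)) (𝓝[>] (0:ℝ)) (𝓝 0) := by
    refine (tendsto_rpow_neg_atTop hb).comp ?_
    have h := Real.tendsto_log_nhdsGT_zero
    have h2 : Tendsto (fun r : ℝ => -Real.log r * (1/2)) (𝓝[>] (0:ℝ)) atTop :=
      (tendsto_neg_atBot_atTop.comp h).atTop_mul_const (by norm_num)
    refine (tendsto_atTop_add_const_left _ 1 h2).congr ?_
    intro r; ring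
  have hsum := ((hpow a ha).add (hpow (a/2) (by positivity))).add hlog
  simp only [add_zero] at hsum
  have hmain : Tendsto (fun r => r ^ a * F r) (𝓝[>] (0:ℝ)) (𝓝[>] 0) := by
    apply tendsto_nhdsWithin_of_tendsto_nhds_of_eventually_within
    · refine squeeze_zero' ?_ ?_ hsum
      · filter_upwards [hev] with r hr
        have := hF1 r hr
        have := Real.rpow_pos_of_pos hr.1 a
        positivity
      · filter_upwards [hev] with r hr using hbd r hr
    · filter_upwards [hev] with r hr
      have h1 := hF1 r hr
      have h2 := Real.rpow_pos_of_pos hr.1 a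
      exact mul_pos h2 (by linarith)
  have hfin := (tendsto_rpow_neg_nhdsGT_zero (y := -(1/a)) (by
    have : 0 < 1 / a := by positivity
    linarith)).comp hmain
  refine hfin.congr' ?_
  filter_upwards [hev] with r hr
  have h1 := hF1 r hr
  have h2 := Real.rpow_pos_of_pos hr.1 a
  simp only [Function.comp]
  rw [Real.mul_rpow h2.le (by linarith), ← Real.rpow_mul hr.1.le]
  have e : a * -(1 / a) = -1 := by field_simp
  rw [e, Real.rpow_neg_one]
  change r⁻¹ * F r ^ (-(1/a)) = F r ^ (-(1/a)) / r
  rw [mul_comm]; rfl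

/-- `g(r)/r → ∞` as `r → 0+`, so the example radial homeomorphism satisfies
`limsup_{x→0} |f(x)-f(0)|/|x| = ∞`, i.e. it is not (finitely) Lipschitz at the origin. -/
theorem stmt_16 (n : ℕ) (hn : 3 ≤ n) (p : ℝ)
    (hp : p ∈ Ioo (n : ℝ) ((n : ℝ) + 1 / ((n : ℝ) - 2))) :
    Tendsto (fun r : ℝ => gfun n p r / r) (𝓝[>] (0:ℝ)) atTop ∧
    LAt (fmap n p) 0 = ⊤ := by
  have hn' : (3:ℝ) ≤ n := by exact_mod_cast hn
  have ha : 0 < p - n := by linarith [hp.1]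
  have hb : 0 < (p - (n:ℝ) + 1) / ((n:ℝ) - 1) := div_pos (by linarith) (by linarith)
  have h1 : Tendsto (fun r : ℝ => gfun n p r / r) (𝓝[>] (0:ℝ)) atTop :=
    aux_tendsto (p - n) _ ha hb
  refine ⟨h1, ?_⟩
  haveI : NeZero n := ⟨by omega⟩
  haveI : Nontrivial (Eucl n) := by
    haveI : Nonempty (Fin n) := ⟨0⟩
    infer_instance
  have h2 : Tendsto (fun x : Eucl n => gfun n p ‖x‖ / ‖x‖) (𝓝[≠] 0) atTop :=
    h1.comp (tendsto_norm_nhdsNE_zero)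
  have h3 : Tendsto (fun x : Eucl n => edist (fmap n p x) (fmap n p 0) / edist x 0)
      (𝓝[≠] 0) (𝓝 ⊤) := by
    refine (ENNReal.tendsto_ofReal_atTop.comp h2).congr' ?_
    filter_upwards [self_mem_nhdsWithin, h2.eventually_ge_atTop 0] with x hx hx2
    have hx0 : x ≠ 0 := hx
    have hpos : 0 < ‖x‖ := norm_pos_iff.mpr hx0
    simp only [Function.comp, fmap, if_neg hx0, if_true]
    rw [edist_dist, edist_dist, dist_zero_right, dist_zero_right, norm_smul,
      Real.norm_of_nonneg hx2, ← ENNReal.ofReal_div_of_pos hpos, mul_div_cancel_right₀ _ hpos.ne']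
  exact h3.limsup_eq
end
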